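/- Every 3-connected graph on n vertices with minimum degree δ ≥ max{(n + 2κ)/4, α} is hamiltonian, where κ is the connectivity and α the independence number. -/

import Mathlib

open SimpleGraph

variable {V : Type*}

/-- `G` is `k`-connected: more than `k` vertices and removing fewer than `k`
vertices leaves a connected graph. -/
def KConnected (G : SimpleGraph V) [Fintype V] [DecidableEq V] (k : ℕ) : Prop :=
  k < Fintype.card V ∧
    ∀ S : Finset V, S.card < k → (G.induce ((↑S : Set V)ᶜ)).Connected

/-- vertex connectivity `κ`. -/
noncomputable def connectivity (G : SimpleGraph V) [Fintype V] [DecidableEq V] : ℕ :=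
  sSup {k | KConnected G k}

/-- independence number `α`. -/
noncomputable def indepNumber (G : SimpleGraph V) [Fintype V] [DecidableEq V] : ℕ :=
  sSup {k | ∃ s : Finset V, (∀ u ∈ s, ∀ v ∈ s, ¬ G.Adj u v) ∧ s.card = k}

/-- circumference `c`: length of a longest cycle. -/
noncomputable def circumference (G : SimpleGraph V) [Fintype V] [DecidableEq V] : ℕ :=
  sSup {n | ∃ (v : V) (w : G.Walk v v), w.IsCycle ∧ w.length = n}

/-- `w` is a longest cycle of `G`. -/
def IsLongestCycle {G : SimpleGraph V} {v : V} (w : G.Walk v v) : Prop :=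
  w.IsCycle ∧ ∀ (u : V) (w' : G.Walk u u), w'.IsCycle → w'.length ≤ w.length

/-- dominating cycle: every edge has an endpoint on the cycle. -/
def IsDominatingCycle {G : SimpleGraph V} {v : V} (w : G.Walk v v) : Prop :=
  w.IsCycle ∧ ∀ x y, G.Adj x y → x ∈ w.support ∨ y ∈ w.support

/-- generalized cycle of length `n` with vertex set `W`: single vertices are
cycles of length 1, edges are cycles of length 2. -/
def ExtCycle (G : SimpleGraph V) (W : Set V) (n : ℕ) : Prop :=
  (n = 1 ∧ ∃ v : V, W = {v}) ∨
  (n = 2 ∧ ∃ u v : V, G.Adj u v ∧ W = {u, v}) ∨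
  (3 ≤ n ∧ ∃ (v : V) (w : G.Walk v v), w.IsCycle ∧ w.length = n ∧
      W = {x | x ∈ w.support})

/-- `p̄`: the length of a longest path in `G \ C`. -/
noncomputable def pathBar (G : SimpleGraph V) [Fintype V] [DecidableEq V] {v : V} (w : G.Walk v v) : ℕ :=
  sSup {n | ∃ (a b : {x : V | x ∉ w.support})
      (p : (G.induce {x : V | x ∉ w.support}).Walk a b), p.IsPath ∧ p.length = n}

/-- `c̄`: the length of a longest (generalized) cycle in `G \ C`. -/
noncomputable def cycBar (G : SimpleGraph V) [Fintype V] [DecidableEq V] {v : V} (w : G.Walk v v) : ℕ :=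
  sSup {n | ∃ W, ExtCycle (G.induce {x : V | x ∉ w.support}) W n}

/-- `CD_m`-cycle: every (generalized) cycle of length at least `m` meets `w`. -/
def IsCDCycle (G : SimpleGraph V) {v : V} (w : G.Walk v v) (m : ℕ) : Prop :=
  w.IsCycle ∧ ∀ (W : Set V) (n : ℕ), ExtCycle G W n → m ≤ n → ∃ x ∈ W, x ∈ w.support

/-!
Let `C` be a longest cycle and let `H` be a component of `G - C`. Any detour through `H`, or any
crossing of chords of `C` combined with one, would lengthen `C`; so the neighbours of `H` are far
apart on `C`, and their successors on `C` have few possible adjacencies.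

* Counting the neighbours of two such successors gives `|N(y) \ H| + 2δ + |H| ≤ n + 2` for `y ∈ H`.
  If `|H| ≥ 3`, this makes `H` so dense that it contains long paths between its vertices; by
  3-connectivity at least three gaps between attachments on `C` must then be long, and `C` becomes
  longer than `n + 2κ ≤ 4δ` allows.
* If `|H| = 2`, take a minimum separator `S`, with `G - S` split into `A` and `B`. Some gap of `C`
  has two interior vertices, both outside `S`; exchanging them with `H` yields a longest cycle whose
  remaining component lies in `A`, say. The neighbours of that component, their shifts one step
  forwards and backwards along the cycle, and the closed neighbourhood of a vertex of `B` then
  overlap too little to fit into `G`.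
* If `H = {v}`, then `v` and the successors of its neighbours are independent, so `α > δ`.
-/

/-- A path of `G` from `a` to `b`, recorded as the list of its vertices. Lists are used instead of
`SimpleGraph.Walk` because most end vertices below are values `c i` of an integer-indexed cycle, for
which dependent types in the end vertices would require casts. -/
structure IsListPath (G : SimpleGraph V) (l : List V) (a b : V) : Prop where
  isChain : l.IsChain G.Adj
  nodup : l.Nodup
  head? : l.head? = some a
  getLast? : l.getLast? = some b

namespace IsListPath
variable {G : SimpleGraph V} {l l₁ l₂ : List V} {a b p q : V}

theorem append (h₁ : IsListPath G l₁ a p) (h₂ : IsListPath G l₂ q b) (h : G.Adj p q)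
    (hd : l₁.Disjoint l₂) : IsListPath G (l₁ ++ l₂) a b where
  isChain := List.isChain_append.2
    ⟨h₁.isChain, h₂.isChain, by simpa [h₁.getLast?, h₂.head?] using h⟩
  nodup := List.nodup_append'.2 ⟨h₁.nodup, h₂.nodup, hd⟩
  head? := by simp [h₁.head?]
  getLast? := by simp [h₂.getLast?]

theorem reverse (h : IsListPath G l a b) : IsListPath G l.reverse b a where
  isChain := List.isChain_reverse.2 (h.isChain.imp fun _ _ => .symm)
  nodup := List.nodup_reverse.2 h.nodup
  head? := by simpa using h.getLast?
  getLast? := by simpa using h.head?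

theorem singleton (G : SimpleGraph V) (a : V) : IsListPath G [a] a a := by
  constructor <;> simp

theorem left_mem (h : IsListPath G l a b) : a ∈ l := List.mem_of_mem_head? h.head?

theorem right_mem (h : IsListPath G l a b) : b ∈ l := List.mem_of_mem_getLast? h.getLast?

theorem length_pos (h : IsListPath G l a b) : 0 < l.length := List.length_pos_of_mem h.left_mem

theorem one_lt_length (h : IsListPath G l a b) (hab : a ≠ b) : 1 < l.length := by
  by_contra! hl
  obtain ⟨x, rfl⟩ := List.length_eq_one_iff.1 (hl.antisymm h.length_pos)
  exact hab ((List.mem_singleton.1 h.left_mem).trans (List.mem_singleton.1 h.right_mem).symm)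

theorem getElem_zero (h : IsListPath G l a b) : l[0]'h.length_pos = a := by
  simpa [List.head?_eq_getElem?, List.getElem?_eq_getElem h.length_pos] using h.head?

theorem getElem_length_sub_one (h : IsListPath G l a b) :
    l[l.length - 1]'(Nat.sub_lt h.length_pos one_pos) = b := by
  simpa [List.getLast?_eq_getElem?, h.length_pos] using h.getLast?

end IsListPath

/-- The list `c i, c (i + 1), …, c j` of consecutive values of `c`, both ends included; it is empty
for `j < i`. -/
def arc (c : ℤ → V) (i j : ℤ) : List V :=
  (List.range (j + 1 - i).toNat).map fun k : ℕ => c (i + k)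

theorem length_arc (c : ℤ → V) (i j : ℤ) : (arc c i j).length = (j + 1 - i).toNat := by
  simp [arc]

theorem mem_arc {c : ℤ → V} {i j : ℤ} {v : V} :
    v ∈ arc c i j ↔ ∃ k, i ≤ k ∧ k ≤ j ∧ c k = v := by
  simp only [arc, List.mem_map, List.mem_range]
  constructor
  · rintro ⟨k, hk, rfl⟩
    exact ⟨i + k, by omega, by omega, rfl⟩
  · rintro ⟨k, hik, hkj, rfl⟩
    exact ⟨(k - i).toNat, by omega, by congr 1; omega⟩

theorem mem_range_of_mem_arc {c : ℤ → V} {i j : ℤ} {v : V} (hv : v ∈ arc c i j) :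
    v ∈ Set.range c :=
  let ⟨k, _, _, hk⟩ := mem_arc.1 hv
  ⟨k, hk⟩

theorem isListPath_arc {G : SimpleGraph V} {c : ℤ → V} {i j : ℤ} (hij : i ≤ j)
    (hadj : ∀ k, i ≤ k → k < j → G.Adj (c k) (c (k + 1))) (hinj : Set.InjOn c (Set.Icc i j)) :
    IsListPath G (arc c i j) (c i) (c j) := by
  obtain ⟨d, rfl⟩ : ∃ d : ℕ, j = i + d := ⟨(j - i).toNat, by omega⟩
  have hlen : (i + d + 1 - i).toNat = d + 1 := by omega
  constructor
  · refine List.isChain_iff_getElem.2 fun k hk => ?_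
    rw [length_arc] at hk
    simpa [arc, add_assoc] using hadj (i + k) (by omega) (by omega)
  · refine List.Nodup.map_on (fun k hk m hm hkm => ?_) List.nodup_range
    rw [List.mem_range] at hk hm
    have := hinj (Set.mem_Icc.2 ⟨by omega, by omega⟩) (Set.mem_Icc.2 ⟨by omega, by omega⟩) hkm
    omega
  · simp [arc, hlen, List.range_succ_eq_map]
  · simp [arc, hlen, List.range_succ]

/-- A cycle of length `n` in `G`, encoded as an `n`-periodic function on `ℤ`. -/
structure IsCycleMap (G : SimpleGraph V) (c : ℤ → V) (n : ℕ) : Prop where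
  three_le : 3 ≤ n
  eq_iff_dvd : ∀ i j, c i = c j ↔ (n : ℤ) ∣ i - j
  adj : ∀ i, G.Adj (c i) (c (i + 1))

namespace IsCycleMap
variable {G : SimpleGraph V} {c : ℤ → V} {n : ℕ}

theorem ne (h : IsCycleMap G c n) {i j : ℤ} (hij : i < j) (hji : j < i + n) : c i ≠ c j := by
  intro he
  have := Int.le_of_dvd (by omega) ((h.eq_iff_dvd j i).1 he.symm)
  omega

theorem apply_add (h : IsCycleMap G c n) (i : ℤ) : c (i + n) = c i := by
  rw [h.eq_iff_dvd]; simp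

theorem injOn_Ioc (h : IsCycleMap G c n) (i : ℤ) : Set.InjOn c (Set.Ioc i (i + n)) := by
  rintro j ⟨hj, hj'⟩ k ⟨hk, hk'⟩ hjk
  rcases lt_trichotomy j k with hlt | heq | hlt
  · exact absurd hjk (h.ne hlt (by omega))
  · exact heq
  · exact absurd hjk.symm (h.ne hlt (by omega))

theorem isListPath_arc (h : IsCycleMap G c n) {i j : ℤ} (hij : i ≤ j) (hji : j < i + n) :
    IsListPath G (arc c i j) (c i) (c j) :=
  _root_.isListPath_arc hij (fun k _ _ => h.adj k)
    ((h.injOn_Ioc (i - 1)).mono fun k hk => by simp only [Set.mem_Icc, Set.mem_Ioc] at hk ⊢; omega)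

theorem disjoint_arc (h : IsCycleMap G c n) {i j k m : ℤ} (hjk : j < k) (hmi : m < i + n) :
    (arc c i j).Disjoint (arc c k m) := by
  intro x hx hy
  obtain ⟨a, _, _, rfl⟩ := mem_arc.1 hx
  obtain ⟨b, _, _, hb⟩ := mem_arc.1 hy
  exact h.ne (by omega) (by omega) hb.symm

theorem comp_neg (h : IsCycleMap G c n) : IsCycleMap G (fun i => c (-i)) n where
  three_le := h.three_le
  eq_iff_dvd i j := by rw [h.eq_iff_dvd, ← dvd_neg]; ring_nf
  adj i := by simpa [neg_add_rev, add_comm] using (h.adj (-(i + 1))).symm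

theorem exists_index_Ioc (h : IsCycleMap G c n) (i k : ℤ) : ∃ j ∈ Set.Ioc k (k + n), c j = c i := by
  have hn : (0 : ℤ) < n := by have := h.three_le; omega
  refine ⟨toIocMod hn k i, toIocMod_mem_Ioc hn k i, ?_⟩
  rw [h.eq_iff_dvd]
  exact ⟨-toIocDiv hn k i, by rw [toIocMod]; simp; ring⟩

end IsCycleMap

theorem IsListPath.adj_getElem_mod {G : SimpleGraph V} {l : List V} {a b : V}
    (h : IsListPath G l a b) (hba : G.Adj b a) {k : ℕ} (hk : k < l.length) :
    G.Adj l[k] (l[(k + 1) % l.length]'(Nat.mod_lt _ h.length_pos)) := by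
  rcases (Nat.succ_le_of_lt hk).lt_or_eq with hlt | heq
  · simpa only [Nat.mod_eq_of_lt hlt] using List.isChain_iff_getElem.1 h.isChain k hlt
  · obtain rfl : k = l.length - 1 := by omega
    simpa only [heq, Nat.sub_add_cancel h.length_pos, Nat.mod_self, h.getElem_zero,
      h.getElem_length_sub_one] using hba

theorem exists_isCycleMap {G : SimpleGraph V} {l : List V} {a b : V} (h : IsListPath G l a b)
    (hba : G.Adj b a) (hl : 3 ≤ l.length) :
    ∃ c : ℤ → V, IsCycleMap G c l.length ∧ ∀ v, v ∈ Set.range c ↔ v ∈ l := by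
  have hmod (i : ℤ) : 0 ≤ i % l.length ∧ i % l.length < l.length :=
    ⟨Int.emod_nonneg i (by omega), Int.emod_lt_of_pos i (by omega)⟩
  have hlt (i : ℤ) : (i % l.length).toNat < l.length := by have := hmod i; omega
  refine ⟨fun i => l[(i % l.length).toNat]'(hlt i), ⟨hl, fun i j => ?_, fun i => ?_⟩, fun v => ?_⟩
  · rw [h.nodup.getElem_inj_iff, Int.dvd_iff_emod_eq_zero,
      ← Int.emod_eq_emod_iff_emod_sub_eq_zero]
    have := hmod i
    have := hmod j
    omega
  · have hsucc : ((i + 1) % l.length).toNat = ((i % l.length).toNat + 1) % l.length := by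
      zify
      rw [Int.toNat_of_nonneg (hmod _).1, Int.toNat_of_nonneg (hmod _).1, Int.emod_add_emod]
    simpa only [hsucc] using h.adj_getElem_mod hba (hlt i)
  · constructor
    · rintro ⟨i, rfl⟩
      exact List.getElem_mem _
    · intro hv
      obtain ⟨k, hk, rfl⟩ := List.getElem_of_mem hv
      refine ⟨k, ?_⟩
      have : (k : ℤ) % l.length = k := Int.emod_eq_of_lt (by omega) (by omega)
      simp [this]

/-- A cycle that is at least as long as every path with adjacent ends, hence a longest cycle. -/
structure IsLongestCycleMap (G : SimpleGraph V) (c : ℤ → V) (n : ℕ) : Prop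
    extends IsCycleMap G c n where
  length_le : ∀ l a b, IsListPath G l a b → G.Adj b a → l.length ≤ n

namespace IsLongestCycleMap
variable {G : SimpleGraph V} {c : ℤ → V} {n : ℕ} {P Q : List V} {s t a b w : V} {i j z : ℤ}

theorem comp_neg (h : IsLongestCycleMap G c n) : IsLongestCycleMap G (fun i => c (-i)) n :=
  ⟨h.toIsCycleMap.comp_neg, h.length_le⟩

theorem length_add_length_le (h : IsLongestCycleMap G c n) (hP : IsListPath G P s t)
    (hQ : IsListPath G Q a b) (hd : P.Disjoint Q) (hta : G.Adj t a) (hbs : G.Adj b s) :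
    P.length + Q.length ≤ n := by
  simpa using h.length_le _ _ _ (hP.append hQ hta hd) hbs

theorem length_lt_sub (h : IsLongestCycleMap G c n) (hP : IsListPath G P s t)
    (hPc : ∀ v ∈ P, v ∉ Set.range c) (hij : i < j) (hji : j < i + n) (hs : G.Adj (c i) s)
    (ht : G.Adj t (c j)) : (P.length : ℤ) < j - i := by
  have hQ := h.isListPath_arc (i := j) (j := i + n) (by omega) (by omega)
  rw [h.apply_add] at hQ
  have := h.length_add_length_le hP hQ (fun v hv hv' => hPc v hv (mem_range_of_mem_arc hv')) ht hs
  rw [length_arc] at this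
  omega

/-- The rotated cycle is `c i, P, c j, c (j - 1), …, c (i + 1), c z, c (z + 1), …, c (i + n)`. -/
theorem length_lt_sub_of_adj (h : IsLongestCycleMap G c n) (hP : IsListPath G P s t)
    (hPc : ∀ v ∈ P, v ∉ Set.range c) (hij : i < j) (hjz : j < z) (hzi : z ≤ i + n)
    (hs : G.Adj (c i) s) (ht : G.Adj t (c j)) (hz : G.Adj (c (i + 1)) (c z)) :
    (P.length : ℤ) < z - j := by
  have hQ₁ := (h.isListPath_arc (i := i + 1) (j := j) (by omega) (by omega)).reverse
  have hQ₂ := h.isListPath_arc (i := z) (j := i + n) (by omega) (by omega)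
  rw [h.apply_add] at hQ₂
  have hQ := hQ₁.append hQ₂ hz (List.disjoint_reverse_left.2 (h.disjoint_arc hjz (by omega)))
  have := h.length_add_length_le hP hQ (fun v hv hv' => hPc v hv (by
    simp only [List.mem_append, List.mem_reverse] at hv'
    rcases hv' with hv' | hv' <;> exact mem_range_of_mem_arc hv')) ht hs
  simp only [List.length_append, List.length_reverse, length_arc] at this
  omega

/-- The longer cycle is
`c i, P, c j, c (j - 1), …, c (z + 1), c (i + 1), …, c z, c (j + 1), …, c (i + n)`. -/
theorem not_adj_of_adj (h : IsLongestCycleMap G c n) (hP : IsListPath G P s t)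
    (hPc : ∀ v ∈ P, v ∉ Set.range c) (hiz : i < z) (hzj : z < j) (hji : j < i + n)
    (hs : G.Adj (c i) s) (ht : G.Adj t (c j)) (hz : G.Adj (c (i + 1)) (c (z + 1))) :
    ¬ G.Adj (c z) (c (j + 1)) := by
  intro hz'
  have hQ₁ := (h.isListPath_arc (i := z + 1) (j := j) (by omega) (by omega)).reverse
  have hQ₂ := h.isListPath_arc (i := i + 1) (j := z) (by omega) (by omega)
  have hQ₃ := h.isListPath_arc (i := j + 1) (j := i + n) (by omega) (by omega)
  rw [h.apply_add] at hQ₃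
  have hQ := hQ₁.append (hQ₂.append hQ₃ hz' (h.disjoint_arc (by omega) (by omega))) hz.symm
    (List.disjoint_reverse_left.2 (List.disjoint_append_right.2
      ⟨(h.disjoint_arc (by omega) (by omega)).symm, h.disjoint_arc (by omega) (by omega)⟩))
  have := h.length_add_length_le hP hQ (fun v hv hv' => hPc v hv (by
    simp only [List.mem_append, List.mem_reverse] at hv'
    rcases hv' with hv' | hv' | hv' <;> exact mem_range_of_mem_arc hv')) ht hs
  have hpos := hP.length_pos
  simp only [List.length_append, List.length_reverse, length_arc] at this
  omega

/-- The longer cycle is `c i, P, c j, c (j - 1), …, c (i + 1), w, c (j + 1), …, c (i + n)`. -/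
theorem not_adj_of_adj_off (h : IsLongestCycleMap G c n) (hP : IsListPath G P s t)
    (hPc : ∀ v ∈ P, v ∉ Set.range c) (hij : i < j) (hji : j < i + n) (hs : G.Adj (c i) s)
    (ht : G.Adj t (c j)) (hwP : w ∉ P) (hwc : w ∉ Set.range c) (hw : G.Adj (c (i + 1)) w) :
    ¬ G.Adj w (c (j + 1)) := by
  intro hw'
  have hQ₁ := (h.isListPath_arc (i := i + 1) (j := j) (by omega) (by omega)).reverse
  have hQ₂ := h.isListPath_arc (i := j + 1) (j := i + n) (by omega) (by omega)
  rw [h.apply_add] at hQ₂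
  have hw_arc (a b : ℤ) : w ∉ arc c a b := fun hwa => hwc (mem_range_of_mem_arc hwa)
  have hQ := hQ₁.append ((IsListPath.singleton G w).append hQ₂ hw'
    (List.singleton_disjoint.2 (hw_arc _ _))) hw
    (List.disjoint_reverse_left.2 (List.disjoint_append_right.2
      ⟨List.disjoint_singleton.2 (hw_arc _ _), h.disjoint_arc (by omega) (by omega)⟩))
  have := h.length_add_length_le hP hQ (fun v hv hv' => by
    simp only [List.mem_append, List.mem_reverse, List.mem_singleton] at hv'
    rcases hv' with hv' | rfl | hv'
    exacts [hPc v hv (mem_range_of_mem_arc hv'), hwP hv, hPc v hv (mem_range_of_mem_arc hv')]) ht hs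
  have hpos := hP.length_pos
  simp only [List.length_append, List.length_reverse, List.length_singleton, length_arc] at this
  omega

end IsLongestCycleMap

theorem exists_isListPath {G : SimpleGraph V} {H : Finset V}
    (hH : (G.induce (H : Set V)).Preconnected) {s t : V} (hs : s ∈ H) (ht : t ∈ H) :
    ∃ l, IsListPath G l s t ∧ ∀ v ∈ l, v ∈ H := by
  classical
  obtain ⟨⟨w, hw⟩⟩ : Nonempty ((G.induce (H : Set V)).Path ⟨s, hs⟩ ⟨t, ht⟩) :=
    (hH ⟨s, hs⟩ ⟨t, ht⟩).elim fun w => ⟨w.toPath⟩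
  refine ⟨w.support.map Subtype.val, ⟨?_, hw.support_nodup.map Subtype.val_injective, ?_, ?_⟩, ?_⟩
  · exact (List.isChain_map _).2 w.isChain_adj_support
  · rw [List.head?_map, List.head?_eq_some_head w.support_ne_nil, Walk.head_support,
      Option.map_some]
  · rw [List.getLast?_map, List.getLast?_eq_some_getLast w.support_ne_nil, Walk.getLast_support,
      Option.map_some]
  · intro v hv
    obtain ⟨u, -, rfl⟩ := List.mem_map.1 hv
    exact u.2

/-- `H` is the vertex set of a component of `G` minus the cycle `c`, or empty. -/
structure IsComponentOff (G : SimpleGraph V) (c : ℤ → V) (H : Finset V) : Prop where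
  preconnected : (G.induce (H : Set V)).Preconnected
  mem_or_mem_range : ∀ s ∈ H, ∀ w, G.Adj s w → w ∈ H ∨ w ∈ Set.range c
  notMem_range : ∀ v ∈ H, v ∉ Set.range c

namespace IsComponentOff
variable {G : SimpleGraph V} {c : ℤ → V} {n : ℕ} {H : Finset V} {s t w : V} {i j z : ℤ}

theorem comp_neg (hH : IsComponentOff G c H) : IsComponentOff G (fun i => c (-i)) H := by
  have hrange : Set.range (fun i => c (-i)) = Set.range c := neg_surjective.range_comp c
  exact ⟨hH.preconnected, hrange ▸ hH.mem_or_mem_range, hrange ▸ hH.notMem_range⟩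

theorem exists_path (hH : IsComponentOff G c H) (hs : s ∈ H) (ht : t ∈ H) :
    ∃ P, IsListPath G P s t ∧ (∀ v ∈ P, v ∈ H) ∧ ∀ v ∈ P, v ∉ Set.range c :=
  let ⟨P, hP, hPH⟩ := exists_isListPath hH.preconnected hs ht
  ⟨P, hP, hPH, fun v hv => hH.notMem_range v (hPH v hv)⟩

theorem add_one_lt (hH : IsComponentOff G c H) (h : IsLongestCycleMap G c n) (hs : s ∈ H)
    (ht : t ∈ H) (hij : i < j) (hji : j < i + n) (hi : G.Adj (c i) s) (hj : G.Adj t (c j)) :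
    i + 1 < j := by
  obtain ⟨P, hP, -, hPc⟩ := hH.exists_path hs ht
  have := h.length_lt_sub hP hPc hij hji hi hj
  have := hP.length_pos
  omega

theorem add_two_lt (hH : IsComponentOff G c H) (h : IsLongestCycleMap G c n) (hs : s ∈ H)
    (ht : t ∈ H) (hst : s ≠ t) (hij : i < j) (hji : j < i + n) (hi : G.Adj (c i) s)
    (hj : G.Adj t (c j)) : i + 2 < j := by
  obtain ⟨P, hP, -, hPc⟩ := hH.exists_path hs ht
  have := h.length_lt_sub hP hPc hij hji hi hj
  have := hP.one_lt_length hst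
  omega

theorem not_adj_succ (hH : IsComponentOff G c H) (h : IsLongestCycleMap G c n) (hs : s ∈ H)
    (ht : t ∈ H) (hi : G.Adj (c i) s) : ¬ G.Adj (c (i + 1)) t := by
  intro hi'
  have := hH.add_one_lt h hs ht (by omega) (by have := h.three_le; omega) hi hi'.symm
  omega

theorem not_adj_succ_succ (hH : IsComponentOff G c H) (h : IsLongestCycleMap G c n) (hs : s ∈ H)
    (ht : t ∈ H) (hij : i < j) (hji : j < i + n) (hi : G.Adj (c i) s) (hj : G.Adj t (c j)) :
    ¬ G.Adj (c (i + 1)) (c (j + 1)) := by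
  intro hadj
  obtain ⟨P, hP, -, hPc⟩ := hH.exists_path hs ht
  have := h.length_lt_sub_of_adj hP hPc hij (by omega) (by omega) hi hj hadj
  have := hP.length_pos
  omega

theorem not_adj_succ_add_two (hH : IsComponentOff G c H) (h : IsLongestCycleMap G c n)
    (hs : s ∈ H) (ht : t ∈ H) (hst : s ≠ t) (hij : i < j) (hji : j + 1 < i + n)
    (hi : G.Adj (c i) s) (hj : G.Adj t (c j)) : ¬ G.Adj (c (i + 1)) (c (j + 2)) := by
  intro hadj
  obtain ⟨P, hP, -, hPc⟩ := hH.exists_path hs ht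
  have := h.length_lt_sub_of_adj hP hPc hij (by omega) (by omega) hi hj hadj
  have := hP.one_lt_length hst
  omega

theorem not_adj_of_adj (hH : IsComponentOff G c H) (h : IsLongestCycleMap G c n) (hs : s ∈ H)
    (ht : t ∈ H) (hiz : i < z) (hzj : z < j) (hji : j < i + n) (hi : G.Adj (c i) s)
    (hj : G.Adj t (c j)) (hz : G.Adj (c (i + 1)) (c (z + 1))) : ¬ G.Adj (c z) (c (j + 1)) := by
  obtain ⟨P, hP, -, hPc⟩ := hH.exists_path hs ht
  exact h.not_adj_of_adj hP hPc hiz hzj hji hi hj hz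

theorem not_adj_of_adj_off (hH : IsComponentOff G c H) (h : IsLongestCycleMap G c n) (hs : s ∈ H)
    (ht : t ∈ H) (hij : i < j) (hji : j < i + n) (hi : G.Adj (c i) s) (hj : G.Adj t (c j))
    (hwH : w ∉ H) (hwc : w ∉ Set.range c) (hw : G.Adj (c (i + 1)) w) : ¬ G.Adj w (c (j + 1)) := by
  obtain ⟨P, hP, hPH, hPc⟩ := hH.exists_path hs ht
  exact h.not_adj_of_adj_off hP hPc hij hji hi hj (fun hwP => hwH (hPH w hwP)) hwc hw

end IsComponentOff

theorem KConnected.exists_adj {G : SimpleGraph V} [Fintype V] [DecidableEq V] {k : ℕ}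
    (hG : KConnected G k) {T A : Finset V} {p q : V} (hT : T.card < k) (hpA : p ∈ A) (hpT : p ∉ T)
    (hqA : q ∉ A) (hqT : q ∉ T) : ∃ u ∈ A, ∃ v ∉ A, u ∉ T ∧ v ∉ T ∧ G.Adj u v := by
  obtain ⟨w⟩ := (hG.2 T hT).preconnected ⟨p, by simpa using hpT⟩ ⟨q, by simpa using hqT⟩
  obtain ⟨d, -, hd, hd'⟩ := w.exists_boundary_dart {v | v.1 ∈ A} hpA hqA
  exact ⟨d.fst, hd, d.snd, hd', d.fst.2, d.snd.2, d.adj⟩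

/-- The vertex set of the cycle encoded by `c`. -/
noncomputable def cycleVerts [DecidableEq V] (c : ℤ → V) (n : ℕ) : Finset V :=
  (Finset.Ioc (0 : ℤ) n).image c

/-- The positions `k` in `(i, j]` at which `c` takes a value in `F`. -/
noncomputable def positions [DecidableEq V] (c : ℤ → V) (F : Finset V) (i j : ℤ) : Finset ℤ :=
  {k ∈ Finset.Ioc i j | c k ∈ F}

section Positions
variable [DecidableEq V] {G : SimpleGraph V} {c : ℤ → V} {n : ℕ}

theorem mem_positions {F : Finset V} {i j k : ℤ} :
    k ∈ positions c F i j ↔ (i < k ∧ k ≤ j) ∧ c k ∈ F := by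
  simp [positions]

theorem positions_subset (F : Finset V) (i j : ℤ) : positions c F i j ⊆ Finset.Ioc i j :=
  Finset.filter_subset _ _

theorem card_positions_add {F : Finset V} {i j k : ℤ} (hij : i ≤ j) (hjk : j ≤ k) :
    (positions c F i j).card + (positions c F j k).card = (positions c F i k).card := by
  rw [← Finset.card_union_of_disjoint]
  · congr 1
    ext m
    simp only [Finset.mem_union, mem_positions]
    grind
  · rw [Finset.disjoint_left]
    intro m
    simp only [mem_positions]
    omega

namespace IsCycleMap

theorem mem_cycleVerts (h : IsCycleMap G c n) {v : V} : v ∈ cycleVerts c n ↔ v ∈ Set.range c := by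
  simp only [cycleVerts, Finset.mem_image, Finset.mem_Ioc]
  constructor
  · rintro ⟨k, -, rfl⟩
    exact ⟨k, rfl⟩
  · rintro ⟨i, rfl⟩
    obtain ⟨j, hj, hji⟩ := h.exists_index_Ioc i 0
    exact ⟨j, by simpa using hj, hji⟩

theorem image_positions (h : IsCycleMap G c n) (F : Finset V) (i : ℤ) :
    (positions c F i (i + n)).image c = F ∩ cycleVerts c n := by
  ext v
  simp only [Finset.mem_image, Finset.mem_inter, h.mem_cycleVerts, mem_positions]
  constructor
  · rintro ⟨k, hk, rfl⟩
    exact ⟨hk.2, k, rfl⟩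
  · rintro ⟨hvF, k, rfl⟩
    obtain ⟨j, hj, hjk⟩ := h.exists_index_Ioc k i
    exact ⟨j, ⟨hj, hjk ▸ hvF⟩, hjk⟩

theorem card_positions (h : IsCycleMap G c n) (F : Finset V) (i : ℤ) :
    (positions c F i (i + n)).card = (F ∩ cycleVerts c n).card := by
  rw [← h.image_positions F i, Finset.card_image_of_injOn]
  exact (h.injOn_Ioc i).mono fun k hk => (mem_positions.1 hk).1

theorem card_cycleVerts (h : IsCycleMap G c n) : (cycleVerts c n).card = n := by
  rw [cycleVerts, Finset.card_image_of_injOn (by simpa using h.injOn_Ioc 0)]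
  simp

theorem cycleVerts_comp_neg (h : IsCycleMap G c n) :
    cycleVerts (fun i => c (-i)) n = cycleVerts c n := by
  ext v
  rw [h.comp_neg.mem_cycleVerts, h.mem_cycleVerts, ← neg_surjective.range_comp c]
  rfl

end IsCycleMap
end Positions

/-- Up to one element of `X`, the sets `X + 1`, `O - 1`, `T` and `Z \ T` are disjoint. -/
theorem card_add_card_le_of_shift_disjoint {a b : ℤ} {X O T Z : Finset ℤ}
    (hX : X ⊆ Finset.Ioc a b) (hO : O ⊆ Finset.Ioc a b) (hT : T ⊆ Finset.Ioc a b)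
    (hZ : Z ⊆ Finset.Ioc a b) (haO : a + 1 ∉ O) (hXO : ∀ k ∈ X, k + 2 ∉ O)
    (hXT : ∀ k ∈ X, k + 1 ∉ T) (hXZ : ∀ k ∈ X, k + 1 ∉ Z) (hOT : ∀ k ∈ T, k + 1 ∉ O)
    (hOZ : ∀ k ∈ Z, k + 1 ∉ O) :
    X.card + Z.card + O.card + T.card ≤ (b - a).toNat + 1 + (Z ∩ T).card := by
  have hcard : ((X.erase b).image (· + 1) ∪ O.image (· - 1) ∪ T ∪ Z \ T).card ≤ (b - a).toNat := by
    rw [← Int.card_Ioc]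
    refine Finset.card_le_card fun k hk => ?_
    simp only [Finset.mem_union, Finset.mem_image, Finset.mem_erase, Finset.mem_sdiff] at hk
    have hX' (k) (hk : k ∈ X) := Finset.mem_Ioc.1 (hX hk)
    have hO' (k) (hk : k ∈ O) := Finset.mem_Ioc.1 (hO hk)
    rw [Finset.mem_Ioc]
    rcases hk with ((⟨m, hm, rfl⟩ | ⟨m, hm, rfl⟩) | hk) | hk
    · have := hX' m hm.2; omega
    · have := hO' m hm
      have : m ≠ a + 1 := by rintro rfl; exact haO hm
      omega
    · exact Finset.mem_Ioc.1 (hT hk)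
    · exact Finset.mem_Ioc.1 (hZ hk.1)
  rw [Finset.card_union_of_disjoint, Finset.card_union_of_disjoint, Finset.card_union_of_disjoint,
    Finset.card_image_of_injective _ (add_left_injective 1),
    Finset.card_image_of_injective _ (sub_left_injective (b := 1))] at hcard
  · have := Finset.pred_card_le_card_erase (s := X) (a := b)
    have := Finset.card_sdiff_add_card_inter Z T
    omega
  all_goals
    rw [Finset.disjoint_left]
    intro k hk
    simp only [Finset.mem_union, Finset.mem_image, Finset.mem_erase, Finset.mem_sdiff] at hk ⊢
  · rintro ⟨m, hm, rfl⟩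
    obtain ⟨m', hm', hmm'⟩ := hk
    exact hXO m' hm'.2 (by convert hm using 1; omega)
  · rintro hkT
    rcases hk with ⟨m, hm, rfl⟩ | ⟨m, hm, rfl⟩
    · exact hXT m hm.2 hkT
    · exact hOT _ hkT (by simpa using hm)
  · rintro ⟨hkZ, hkT⟩
    rcases hk with (⟨m, hm, rfl⟩ | ⟨m, hm, rfl⟩) | hk
    · exact hXZ m hm.2 hkZ
    · exact hOZ _ hkZ (by simpa using hm)
    · exact hkT hk

/-- The cycle vertices with a neighbour in `H`. -/
noncomputable def attachments (G : SimpleGraph V) [DecidableEq V] [DecidableRel G.Adj] (c : ℤ → V)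
    (n : ℕ) (H : Finset V) : Finset V :=
  {v ∈ cycleVerts c n | ∃ s ∈ H, G.Adj s v}

theorem mem_attachments [DecidableEq V] {G : SimpleGraph V} [DecidableRel G.Adj] {c : ℤ → V}
    {n : ℕ} {H : Finset V} {v : V} :
    v ∈ attachments G c n H ↔ v ∈ cycleVerts c n ∧ ∃ s ∈ H, G.Adj s v := by
  simp [attachments]

namespace IsComponentOff

theorem disjoint_cycleVerts [DecidableEq V] {G : SimpleGraph V} {c : ℤ → V} {n : ℕ} {H : Finset V}
    (hH : IsComponentOff G c H) (h : IsCycleMap G c n) :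
    Disjoint H (cycleVerts c n) :=
  Finset.disjoint_left.2 fun v hv hvC => hH.notMem_range v hv (h.mem_cycleVerts.1 hvC)

theorem exists_two_attached_ne [Fintype V] [DecidableEq V] {G : SimpleGraph V} {c : ℤ → V} {n : ℕ}
    {H : Finset V} (hH : IsComponentOff G c H) (h : IsCycleMap G c n)
    (h3 : KConnected G 3) {p y : V} (hp : p ∈ H) (hpy : p ≠ y) :
    ∃ (i j : ℤ) (s t : V), i < j ∧ j < i + n ∧ s ∈ H ∧ t ∈ H ∧ s ≠ y ∧ t ≠ y ∧ G.Adj (c i) s ∧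
      G.Adj t (c j) := by
  have hn := h.three_le
  have key (k : ℤ) : ∃ s ∈ H, s ≠ y ∧ ∃ i, c i ≠ c k ∧ G.Adj s (c i) := by
    obtain ⟨m, hmy, hmk⟩ : ∃ m, c m ≠ y ∧ c m ≠ c k := by
      by_cases hk : c (k + 1) = y
      · exact ⟨k + 2, hk ▸ (h.ne (by omega) (by omega)).symm, (h.ne (by omega) (by omega)).symm⟩
      · exact ⟨k + 1, hk, (h.ne (by omega) (by omega)).symm⟩
    have hpk : p ≠ c k := fun hpk => hH.notMem_range p hp ⟨k, hpk.symm⟩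
    obtain ⟨s, hs, q, hq, hsT, hqT, hsq⟩ := h3.exists_adj (T := {y, c k}) (A := H)
      (Finset.card_le_two.trans_lt (by omega)) hp (by simp [hpy, hpk])
      (fun hm => hH.notMem_range _ hm ⟨m, rfl⟩) (by simp [hmy, hmk])
    obtain ⟨i, rfl⟩ := (hH.mem_or_mem_range s hs q hsq).resolve_left hq
    simp only [Finset.mem_insert, Finset.mem_singleton, not_or] at hsT hqT
    exact ⟨s, hs, hsT.1, i, hqT.2, hsq⟩
  obtain ⟨s, hs, hsy, i, -, hi⟩ := key 0
  obtain ⟨t, ht, hty, j, hji, hj⟩ := key i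
  obtain ⟨j', hj', hjj'⟩ := h.exists_index_Ioc j i
  have hne : j' ≠ i + n := by rintro rfl; exact hji (hjj' ▸ h.apply_add i)
  exact ⟨i, j', s, t, hj'.1, hj'.2.lt_of_ne hne, hs, ht, hsy, hty, hi.symm, hjj' ▸ hj⟩

variable [Fintype V] [DecidableEq V] {G : SimpleGraph V} [DecidableRel G.Adj] {c : ℤ → V} {n : ℕ}
  {H Y : Finset V} {s t x : V} {i j : ℤ}

theorem neighborFinset_sdiff (hH : IsComponentOff G c H) (h : IsCycleMap G c n) (hx : x ∈ H) :
    G.neighborFinset x \ H = G.neighborFinset x ∩ cycleVerts c n := by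
  ext v
  simp only [Finset.mem_sdiff, Finset.mem_inter, mem_neighborFinset, h.mem_cycleVerts]
  exact and_congr_right fun hv =>
    ⟨(hH.mem_or_mem_range x hx v hv).resolve_left, fun hvc hvH => hH.notMem_range v hvH hvc⟩

theorem card_positions_add_le (hH : IsComponentOff G c H) (h : IsLongestCycleMap G c n)
    (hx : x ∈ H) (hs : s ∈ H) (ht : t ∈ H) (hsx : s ≠ x) (hji : j < i + n)
    (hi : G.Adj (c i) s) (hj : G.Adj t (c j)) (hY : ∀ v ∈ Y, ∃ y ∈ H, G.Adj y v) :
    (positions c (G.neighborFinset x) i j).card + (positions c Y i j).card +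
      (positions c (G.neighborFinset (c (i + 1))) i j).card +
      (positions c (G.neighborFinset (c (j + 1))) i j).card ≤
    (j - i).toNat + 1 + (positions c (Y ∩ G.neighborFinset (c (j + 1))) i j).card := by
  have hYT : positions c (Y ∩ G.neighborFinset (c (j + 1))) i j =
      positions c Y i j ∩ positions c (G.neighborFinset (c (j + 1))) i j := by
    ext; simp only [mem_positions, Finset.mem_inter]; tauto
  rw [hYT]
  apply card_add_card_le_of_shift_disjoint <;> try apply positions_subset
  all_goals simp only [mem_positions, mem_neighborFinset, not_and]
  · simp
  · rintro k ⟨⟨hik, -⟩, hk⟩ ⟨-, _⟩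
    exact hH.not_adj_succ_add_two h hs hx hsx hik (by omega) hi hk
  · rintro k ⟨⟨hik, -⟩, hk⟩ ⟨-, _⟩ hadj
    refine hH.not_adj_succ_succ h ht hx (j := k + n) (by omega) (by omega) hj.symm ?_ ?_
    · rwa [h.apply_add]
    · rwa [add_right_comm, h.apply_add]
  · rintro k ⟨-, hk⟩ - hkY
    obtain ⟨y, hy, hyk⟩ := hY _ hkY
    exact hH.not_adj_succ h hx hy hk.symm hyk.symm
  · rintro k ⟨⟨hik, -⟩, hk⟩ ⟨-, _⟩ hadj
    exact hH.not_adj_of_adj h hs ht hik (by omega) hji hi hj hadj hk.symm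
  · rintro k ⟨⟨hik, -⟩, hkY⟩ ⟨-, _⟩
    obtain ⟨y, hy, hyk⟩ := hY _ hkY
    exact hH.not_adj_succ_succ h hs hy hik (by omega) hi hyk

theorem card_inter_cycleVerts_add_le (hH : IsComponentOff G c H) (h : IsLongestCycleMap G c n)
    (hx : x ∈ H) (hs : s ∈ H) (ht : t ∈ H) (hsx : s ≠ x) (htx : t ≠ x) (hij : i < j)
    (hji : j < i + n) (hi : G.Adj (c i) s) (hj : G.Adj t (c j)) (hY : Y ⊆ attachments G c n H) :
    (G.neighborFinset x ∩ cycleVerts c n).card + Y.card +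
      (G.neighborFinset (c (i + 1)) ∩ cycleVerts c n).card +
      (G.neighborFinset (c (j + 1)) ∩ cycleVerts c n).card ≤
    n + 2 + (Y ∩ (G.neighborFinset (c (i + 1)) ∪ G.neighborFinset (c (j + 1)))).card := by
  have hYH (v) (hv : v ∈ Y) := (mem_attachments.1 (hY hv)).2
  have h₁ := hH.card_positions_add_le h hx hs ht hsx hji hi hj hYH
  have h₂ := hH.card_positions_add_le h hx ht hs htx (i := j) (j := i + n) (by omega) hj.symm
    (by rw [h.apply_add]; exact hi.symm) hYH
  rw [add_right_comm i (n : ℤ), h.apply_add] at h₂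
  have hsplit (F : Finset V) := (card_positions_add (c := c) (F := F) hij.le hji.le).trans
    (h.card_positions F i)
  have hmono {F F' : Finset V} (hF : F ⊆ F') (a b : ℤ) :
      (positions c F a b).card ≤ (positions c F' a b).card :=
    Finset.card_le_card fun k hk => mem_positions.2
      ⟨(mem_positions.1 hk).1, hF (mem_positions.1 hk).2⟩
  have hYC : Y ∩ cycleVerts c n = Y := Finset.inter_eq_left.2 (hY.trans (Finset.filter_subset _ _))
  have hYU := hsplit (Y ∩ (G.neighborFinset (c (i + 1)) ∪ G.neighborFinset (c (j + 1))))
  rw [Finset.inter_right_comm, hYC] at hYU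
  have hYY := hsplit Y
  rw [hYC] at hYY
  have := hsplit (G.neighborFinset x)
  have := hsplit (G.neighborFinset (c (i + 1)))
  have := hsplit (G.neighborFinset (c (j + 1)))
  have := hmono (Finset.inter_subset_inter (Finset.Subset.refl Y) (Finset.subset_union_right
    (s₁ := G.neighborFinset (c (i + 1))) (s₂ := G.neighborFinset (c (j + 1))))) i j
  have := hmono (Finset.inter_subset_inter (Finset.Subset.refl Y) (Finset.subset_union_left
    (s₁ := G.neighborFinset (c (i + 1))) (s₂ := G.neighborFinset (c (j + 1))))) j (i + n)
  omega

theorem card_neighbors_off_add_le (hH : IsComponentOff G c H) (h : IsLongestCycleMap G c n)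
    (hs : s ∈ H) (ht : t ∈ H) (hij : i < j) (hji : j < i + n) (hi : G.Adj (c i) s)
    (hj : G.Adj t (c j)) :
    (G.neighborFinset (c (i + 1)) \ cycleVerts c n).card +
      (G.neighborFinset (c (j + 1)) \ cycleVerts c n).card + n + H.card ≤ Fintype.card V := by
  have hHC := (hH.disjoint_cycleVerts h.toIsCycleMap).symm
  have hCH := Finset.card_union_of_disjoint hHC
  rw [h.card_cycleVerts] at hCH
  rw [add_assoc, ← hCH, ← Finset.card_union_of_disjoint, ← Finset.card_union_of_disjoint]
  · exact Finset.card_le_univ _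
  all_goals
    rw [Finset.disjoint_left]
    intro v hv hv'
    simp only [Finset.mem_union, Finset.mem_sdiff, mem_neighborFinset] at hv hv'
  · rcases hv with hv | hv <;> rcases hv' with hv' | hv'
    exacts [hv.2 hv', hH.not_adj_succ h hs hv' hi hv.1, hv.2 hv',
      hH.not_adj_succ h ht hv' hj.symm hv.1]
  · exact hH.not_adj_of_adj_off h hs ht hij hji hi hj
      (fun hvH => hH.not_adj_succ h ht hvH hj.symm hv'.1)
      (fun hvc => hv.2 (h.mem_cycleVerts.2 hvc)) hv.1 hv'.1.symm

theorem degree_succ_add_degree_succ_le (hH : IsComponentOff G c H) (h : IsLongestCycleMap G c n)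
    (hx : x ∈ H) (hs : s ∈ H) (ht : t ∈ H) (hsx : s ≠ x) (htx : t ≠ x) (hij : i < j)
    (hji : j < i + n) (hi : G.Adj (c i) s) (hj : G.Adj t (c j)) (hY : Y ⊆ attachments G c n H) :
    (G.neighborFinset x \ H).card + Y.card + G.degree (c (i + 1)) + G.degree (c (j + 1)) + H.card ≤
      Fintype.card V + 2 +
        (Y ∩ (G.neighborFinset (c (i + 1)) ∪ G.neighborFinset (c (j + 1)))).card := by
  have hon := hH.card_inter_cycleVerts_add_le h hx hs ht hsx htx hij hji hi hj hY
  have hoff := hH.card_neighbors_off_add_le h hs ht hij hji hi hj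
  have hdeg (u : V) : G.degree u = (G.neighborFinset u ∩ cycleVerts c n).card +
      (G.neighborFinset u \ cycleVerts c n).card := by
    rw [← card_neighborFinset_eq_degree, Finset.card_inter_add_card_sdiff]
  rw [hH.neighborFinset_sdiff h.toIsCycleMap hx, hdeg (c (i + 1)), hdeg (c (j + 1))]
  omega

theorem card_neighbors_outside_le (hH : IsComponentOff G c H) (h : IsLongestCycleMap G c n)
    (h3 : KConnected G 3) {y : V} (hcard : 2 ≤ H.card) (hy : y ∈ H) :
    (G.neighborFinset y \ H).card + 2 * G.minDegree + H.card ≤ Fintype.card V + 2 := by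
  obtain ⟨p, hp, hpy⟩ := Finset.exists_mem_ne hcard y
  obtain ⟨i, j, s, t, hij, hji, hs, ht, hsy, hty, hi, hj⟩ :=
    hH.exists_two_attached_ne h.toIsCycleMap h3 hp hpy
  have hle := hH.degree_succ_add_degree_succ_le h hy hs ht hsy hty hij hji hi hj
    (Finset.empty_subset _)
  have := G.minDegree_le_degree (c (i + 1))
  have := G.minDegree_le_degree (c (j + 1))
  simp only [Finset.card_empty, Finset.empty_inter] at hle
  omega

end IsComponentOff

/-- `c j` is the first vertex of `M` on the cycle `c` after position `i`; when `c i ∈ M`, the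
positions `i` and `j` bound a gap of `M` of length `j - i`. -/
structure IsNext (c : ℤ → V) (M : Finset V) (i j : ℤ) : Prop where
  lt : i < j
  mem : c j ∈ M
  notMem : ∀ k, i < k → k < j → c k ∉ M

open Classical in
/-- The vertices of `M` that are related by `R` to the next vertex of `M` on the cycle `c`. -/
noncomputable def gapStarts (c : ℤ → V) (M : Finset V) (R : V → V → Prop) : Finset V :=
  {m ∈ M | ∃ i j, c i = m ∧ IsNext c M i j ∧ R m (c j)}

theorem gapStarts_subset {c : ℤ → V} {M : Finset V} {R : V → V → Prop} : gapStarts c M R ⊆ M := by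
  classical exact Finset.filter_subset _ _

theorem IsNext.eq {c : ℤ → V} {M : Finset V} {i j j' : ℤ} (h : IsNext c M i j)
    (h' : IsNext c M i j') : j = j' := by
  rcases lt_trichotomy j j' with hlt | heq | hlt
  · exact absurd h.mem (h'.notMem j h.lt hlt)
  · exact heq
  · exact absurd h'.mem (h.notMem j' h'.lt hlt)

namespace IsCycleMap
variable {G : SimpleGraph V} {c : ℤ → V} {n : ℕ} {M A B : Finset V} {R : V → V → Prop} {i j : ℤ}

theorem apply_add_eq (h : IsCycleMap G c n) (hij : c i = c j) (k : ℤ) : c (i + k) = c (j + k) := by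
  rw [h.eq_iff_dvd] at hij ⊢
  simpa using hij

theorem isNext_add (h : IsCycleMap G c n) (hN : IsNext c M i j) {k : ℤ} (hk : c (i + k) = c i) :
    IsNext c M (i + k) (j + k) := by
  have hshift (m : ℤ) : c (m + k) = c m := by
    convert h.apply_add_eq hk (m - i) using 2 <;> ring
  refine ⟨by linarith [hN.lt], hshift j ▸ hN.mem, fun m him hmj => ?_⟩
  rw [← sub_add_cancel m k, hshift]
  exact hN.notMem _ (by linarith) (by linarith)

theorem mem_gapStarts (h : IsCycleMap G c n) (hN : IsNext c M i j) :
    c i ∈ gapStarts c M R ↔ c i ∈ M ∧ R (c i) (c j) := by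
  simp only [gapStarts, Finset.mem_filter]
  refine and_congr_right fun _ => ⟨?_, fun hR => ⟨i, j, rfl, hN, hR⟩⟩
  rintro ⟨i', j', hi', hN', hR⟩
  have hadd : i' + (i - i') = i := by ring
  have hN'' := h.isNext_add hN' (k := i - i') (by rw [hadd, hi'])
  rw [hadd] at hN''
  rw [hN.eq hN'']
  convert hR using 1
  convert h.apply_add_eq hi'.symm (j' - i') using 2 <;> ring

theorem exists_isNext (h : IsCycleMap G c n) (hj : c j ∈ M) (i : ℤ) :
    ∃ k ≤ i + n, IsNext c M i k := by
  classical
  obtain ⟨k, hk, hkj⟩ := h.exists_index_Ioc j i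
  have hk' : k ∈ positions c M i (i + n) := mem_positions.2 ⟨hk, hkj ▸ hj⟩
  obtain ⟨m, hm, hmin⟩ := Finset.exists_min_image _ id ⟨k, hk'⟩
  rw [mem_positions] at hm
  refine ⟨m, hm.1.2, hm.1.1, hm.2, fun e hie hem he => ?_⟩
  exact hem.not_ge (hmin e (mem_positions.2 ⟨⟨hie, by linarith [hm.1.2]⟩, he⟩))

theorem lt_add_of_isNext [DecidableEq V] (h : IsCycleMap G c n) (hM : M ⊆ cycleVerts c n)
    (hcard : 2 ≤ M.card) (hN : IsNext c M i j) : j < i + n := by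
  by_contra! hj
  obtain ⟨v, hv, hvi⟩ := Finset.exists_mem_ne hcard (c i)
  obtain ⟨k, rfl⟩ := h.mem_cycleVerts.1 (hM hv)
  obtain ⟨m, ⟨him, hmi⟩, hmk⟩ := h.exists_index_Ioc k i
  have hne : m ≠ i + n := by rintro rfl; exact hvi (hmk ▸ h.apply_add i)
  exact hN.notMem m him (by omega) (hmk ▸ hv)

theorem apply_eq_of_mem_gap (h : IsCycleMap G c n) {i' j' k k' : ℤ} (hi : c i ∈ M) (hi' : c i' ∈ M)
    (hN : IsNext c M i j) (hN' : IsNext c M i' j') (hk : k ∈ Set.Ico i j) (hk' : k' ∈ Set.Ico i' j')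
    (hkk' : c k = c k') : c i = c i' := by
  wlog hle : k - i ≤ k' - i' generalizing i i' j j' k k'
  · exact (this hi' hi hN' hN hk' hk hkk'.symm (by linarith)).symm
  have hback := h.apply_add_eq hkk' (i - k)
  rw [add_sub_cancel] at hback
  have heq : k' + (i - k) = i' := by
    by_contra hne
    simp only [Set.mem_Ico] at hk hk'
    exact hN'.notMem _ (by omega) (by omega) (hback ▸ hi)
  rw [hback, heq]

theorem exists_isNext_disjoint [DecidableEq V] (h : IsCycleMap G c n) (hM : M ⊆ cycleVerts c n)
    (hBM : B ⊆ M) (hAB : A.card < B.card) :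
    ∃ i j, c i ∈ B ∧ IsNext c M i j ∧ ∀ k, i < k → k < j → c k ∉ A := by
  by_contra! hcon
  have hgap (m) (hm : m ∈ B) :
      ∃ i j k, c i = m ∧ IsNext c M i j ∧ k ∈ Set.Ico i j ∧ c k ∈ A := by
    obtain ⟨i, rfl⟩ := h.mem_cycleVerts.1 (hM (hBM hm))
    obtain ⟨j, -, hj⟩ := h.exists_isNext (hBM hm) i
    obtain ⟨k, hik, hkj, hk⟩ := hcon i j hm hj
    exact ⟨i, j, k, rfl, hj, ⟨hik.le, hkj⟩, hk⟩
  choose! i j k hi hN hk hkA using hgap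
  obtain ⟨m, hm, m', hm', hne, heq⟩ :=
    Finset.exists_ne_map_eq_of_card_lt_of_maps_to hAB (f := fun m => c (k m)) hkA
  refine hne ?_
  rw [← hi m hm, ← hi m' hm']
  exact h.apply_eq_of_mem_gap ((hi m hm).symm ▸ hBM hm) ((hi m' hm').symm ▸ hBM hm') (hN m hm)
    (hN m' hm') (hk m hm) (hk m' hm') heq

theorem sum_gap_le [DecidableEq V] (h : IsCycleMap G c n) (hM : M ⊆ cycleVerts c n) (f : V → ℕ)
    (hf : ∀ i j, c i ∈ M → IsNext c M i j → (f (c i) : ℤ) ≤ j - i) : ∑ m ∈ M, f m ≤ n := by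
  have hgap (m) (hm : m ∈ M) : ∃ i j, c i = m ∧ j ≤ i + n ∧ IsNext c M i j := by
    obtain ⟨i, rfl⟩ := h.mem_cycleVerts.1 (hM hm)
    obtain ⟨j, hji, hj⟩ := h.exists_isNext hm i
    exact ⟨i, j, rfl, hji, hj⟩
  choose! i j hi hji hN using hgap
  have hcard (m) (hm : m ∈ M) : f m ≤ ((Finset.Ico (i m) (j m)).image c).card := by
    rw [Finset.card_image_of_injOn, Int.card_Ico]
    · have := hf _ _ ((hi m hm).symm ▸ hm) (hN m hm)
      rw [hi m hm] at this
      omega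
    · refine (h.injOn_Ioc (i m - 1)).mono fun k hk => ?_
      have := hji m hm
      simp only [Finset.coe_Ico, Set.mem_Ico, Set.mem_Ioc] at hk ⊢
      omega
  refine (Finset.sum_le_sum hcard).trans ?_
  rw [← Finset.card_biUnion, ← h.card_cycleVerts]
  · refine Finset.card_le_card fun v hv => ?_
    simp only [Finset.mem_biUnion, Finset.mem_image] at hv
    obtain ⟨m, -, k, -, rfl⟩ := hv
    exact h.mem_cycleVerts.2 ⟨k, rfl⟩
  · intro m hm m' hm' hne
    refine Finset.disjoint_left.2 fun v hv hv' => hne ?_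
    obtain ⟨k, hk, rfl⟩ := Finset.mem_image.1 hv
    obtain ⟨k', hk', hkk'⟩ := Finset.mem_image.1 hv'
    rw [← hi m hm, ← hi m' hm']
    exact h.apply_eq_of_mem_gap ((hi m hm).symm ▸ hm) ((hi m' hm').symm ▸ hm') (hN m hm)
      (hN m' hm') (Finset.mem_Ico.1 hk) (Finset.mem_Ico.1 hk') hkk'.symm

theorem mul_card_add_mul_card_gapStarts_le [DecidableEq V] (h : IsCycleMap G c n)
    (hM : M ⊆ cycleVerts c n) {a k : ℕ} (ha : ∀ i j, c i ∈ M → IsNext c M i j → (a : ℤ) ≤ j - i)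
    (hR : ∀ i j, IsNext c M i j → R (c i) (c j) → (a + k : ℤ) ≤ j - i) :
    a * M.card + k * (gapStarts c M R).card ≤ n := by
  have hsum := h.sum_gap_le hM (fun m => a + if m ∈ gapStarts c M R then k else 0)
    fun i j hi hN => by
      split_ifs with hg
      · exact_mod_cast hR i j hN ((h.mem_gapStarts hN).1 hg).2
      · simpa using ha i j hi hN
  rw [Finset.sum_add_distrib, Finset.sum_const, ← Finset.sum_filter, Finset.filter_mem_eq_inter,
    Finset.inter_eq_right.2 gapStarts_subset, Finset.sum_const] at hsum
  simpa only [smul_eq_mul, mul_comm] using hsum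

theorem forall_mem_of_isNext [DecidableEq V] (h : IsCycleMap G c n) (hM : M ⊆ cycleVerts c n)
    {Q : V → Prop} (hQ : ∀ i j, c i ∈ M → Q (c i) → IsNext c M i j → Q (c j)) {m : V} (hm : m ∈ M)
    (hQm : Q m) : ∀ v ∈ M, Q v := by
  obtain ⟨i, rfl⟩ := h.mem_cycleVerts.1 (hM hm)
  have key (k : ℤ) (hik : i ≤ k) :
      ∃ j ≤ k, (c j ∈ M ∧ Q (c j)) ∧ ∀ e, j < e → e ≤ k → c e ∉ M := by
    induction k, hik using Int.leInduction with
    | base => exact ⟨i, le_rfl, ⟨hm, hQm⟩, fun e he he' => absurd he he'.not_gt⟩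
    | succ k _ ih =>
      obtain ⟨j, hjk, hj, hjmax⟩ := ih
      by_cases hk : c (k + 1) ∈ M
      · have hN : IsNext c M j (k + 1) :=
          ⟨by omega, hk, fun e he he' => hjmax e he (by omega)⟩
        exact ⟨k + 1, le_rfl, ⟨hk, hQ j _ hj.1 hj.2 hN⟩, fun e he he' => absurd he he'.not_gt⟩
      · refine ⟨j, by omega, hj, fun e he he' => ?_⟩
        rcases eq_or_lt_of_le he' with rfl | hlt
        exacts [hk, hjmax e he (by omega)]
  intro v hv
  obtain ⟨k, rfl⟩ := h.mem_cycleVerts.1 (hM hv)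
  obtain ⟨k', hk', hkk'⟩ := h.exists_index_Ioc k i
  obtain ⟨j, hjk, hj, hjmax⟩ := key k' hk'.1.le
  rcases eq_or_lt_of_le hjk with rfl | hlt
  · exact hkk' ▸ hj.2
  · exact absurd (hkk' ▸ hv) (hjmax k' hlt le_rfl)

end IsCycleMap

/-- A step of the cycle from one of the sets `A` and `B` to the other. -/
def Crosses (A B : Finset V) (u v : V) : Prop :=
  u ∈ A ∧ v ∈ B ∨ u ∈ B ∧ v ∈ A

namespace IsCycleMap
variable [DecidableEq V] {G : SimpleGraph V} {c : ℤ → V} {n : ℕ} {A B : Finset V}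

theorem exists_isNext_mem_mem (h : IsCycleMap G c n) (hA : A ⊆ cycleVerts c n)
    (hB : B ⊆ cycleVerts c n) (hA' : A.Nonempty) (hB' : B.Nonempty) :
    ∃ i j, IsNext c (A ∪ B) i j ∧ c i ∈ A ∧ c j ∈ B := by
  by_contra! hcon
  obtain ⟨a, ha⟩ := hA'
  obtain ⟨b, hb⟩ := hB'
  obtain ⟨i, rfl⟩ := h.mem_cycleVerts.1 (hA ha)
  have hstep (i j) (hi : c i ∈ A) (hN : IsNext c (A ∪ B) i j) : c j ∈ A ∧ c j ∉ B :=
    have hj := hcon i j hN hi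
    ⟨(Finset.mem_union.1 hN.mem).resolve_right hj, hj⟩
  obtain ⟨j, -, hN⟩ := h.exists_isNext (Finset.mem_union_left B ha) i
  exact (h.forall_mem_of_isNext (Finset.union_subset hA hB) (Q := fun v => v ∈ A ∧ v ∉ B)
    (fun i j _ hi hN => hstep i j hi.1 hN) hN.mem (hstep i j ha hN) b
    (Finset.mem_union_right A hb)).2 hb

theorem inter_subset_gapStarts_crosses (h : IsCycleMap G c n) (hA : A ⊆ cycleVerts c n) :
    A ∩ B ⊆ gapStarts c (A ∪ B) (Crosses A B) := by
  intro m hm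
  rw [Finset.mem_inter] at hm
  obtain ⟨i, rfl⟩ := h.mem_cycleVerts.1 (hA hm.1)
  have hmU := Finset.mem_union_left B hm.1
  obtain ⟨j, -, hN⟩ := h.exists_isNext hmU i
  rw [h.mem_gapStarts hN]
  rcases Finset.mem_union.1 hN.mem with hj | hj
  exacts [⟨hmU, Or.inr ⟨hm.2, hj⟩⟩, ⟨hmU, Or.inl ⟨hm.1, hj⟩⟩]

theorem two_le_card_gapStarts_crosses (h : IsCycleMap G c n) (hA : A ⊆ cycleVerts c n)
    (hB : B ⊆ cycleVerts c n) (hA' : A.Nonempty) (hB' : B.Nonempty) (h2 : 2 ≤ (A ∪ B).card) :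
    2 ≤ (gapStarts c (A ∪ B) (Crosses A B)).card := by
  obtain ⟨i, j, hN, hi, hj⟩ := h.exists_isNext_mem_mem hA hB hA' hB'
  obtain ⟨i', j', hN', hi', hj'⟩ := h.exists_isNext_mem_mem hB hA hB' hA'
  rw [Finset.union_comm] at hN'
  have hmem : c i ∈ gapStarts c (A ∪ B) (Crosses A B) :=
    (h.mem_gapStarts hN).2 ⟨Finset.mem_union_left _ hi, Or.inl ⟨hi, hj⟩⟩
  have hmem' : c i' ∈ gapStarts c (A ∪ B) (Crosses A B) :=
    (h.mem_gapStarts hN').2 ⟨Finset.mem_union_right _ hi', Or.inr ⟨hi', hj'⟩⟩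
  rcases eq_or_ne (c i) (c i') with heq | hne
  · -- the two gaps coincide, so the next vertex lies in both sets and starts a further crossing
    have hjA : c j ∈ A := by
      have hR := (h.mem_gapStarts hN (R := fun _ v => v ∈ A)).1
        (heq ▸ (h.mem_gapStarts hN').2 ⟨Finset.mem_union_right _ hi', hj'⟩)
      exact hR.2
    have hlt := h.lt_add_of_isNext (Finset.union_subset hA hB) h2 hN
    exact Finset.one_lt_card.2 ⟨_, hmem, _,
      h.inter_subset_gapStarts_crosses hA (Finset.mem_inter.2 ⟨hjA, hj⟩), h.ne hN.lt hlt⟩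
  · exact Finset.one_lt_card.2 ⟨_, hmem, _, hmem', hne⟩

end IsCycleMap

theorem card_neighborFinset_inter_add_sdiff [Fintype V] [DecidableEq V] (G : SimpleGraph V)
    [DecidableRel G.Adj] (H : Finset V) (x : V) :
    (G.neighborFinset x ∩ H).card + (G.neighborFinset x \ H).card = G.degree x := by
  rw [Finset.card_inter_add_card_sdiff, card_neighborFinset_eq_degree]

namespace IsComponentOff

theorem card_add_card_le [Fintype V] {G : SimpleGraph V} {c : ℤ → V} {n : ℕ}
    {H : Finset V} (hH : IsComponentOff G c H) (h : IsCycleMap G c n) :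
    n + H.card ≤ Fintype.card V := by
  classical
  rw [← h.card_cycleVerts, add_comm, ← Finset.card_union_of_disjoint (hH.disjoint_cycleVerts h)]
  exact Finset.card_le_univ _

theorem two_le_sub_of_isNext [DecidableEq V] {G : SimpleGraph V} {c : ℤ → V} {n : ℕ}
    {H M : Finset V} {i j : ℤ} (hH : IsComponentOff G c H) (h : IsLongestCycleMap G c n)
    (hM : M ⊆ cycleVerts c n) (hMH : ∀ m ∈ M, ∃ s ∈ H, G.Adj s m) (hcard : 2 ≤ M.card)
    (hi : c i ∈ M) (hN : IsNext c M i j) : 2 ≤ j - i := by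
  obtain ⟨s, hs, hsi⟩ := hMH _ hi
  obtain ⟨t, ht, htj⟩ := hMH _ hN.mem
  have := hH.add_one_lt h hs ht hN.lt (h.lt_add_of_isNext hM hcard hN) hsi.symm htj
  omega

variable [Fintype V] [DecidableEq V] {G : SimpleGraph V} [DecidableRel G.Adj] {c : ℤ → V} {n : ℕ}
  {H : Finset V} {x y : V} {P : List V}

theorem neighborFinset_sdiff_subset (hH : IsComponentOff G c H) (h : IsCycleMap G c n)
    (hx : x ∈ H) : G.neighborFinset x \ H ⊆ cycleVerts c n :=
  hH.neighborFinset_sdiff h hx ▸ Finset.inter_subset_right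

/-- Every gap of `N(x) ∪ N(y)` on the cycle has length at least two, and the gaps crossing from one
neighbourhood to the other are longer than `P`; there are at least two of these, and at least as
many as common neighbours. -/
theorem two_mul_card_neighbors_off_add_le (hH : IsComponentOff G c H) (h : IsLongestCycleMap G c n)
    (hx : x ∈ H) (hy : y ∈ H) (hP : IsListPath G P x y) (hPH : ∀ v ∈ P, v ∈ H)
    (hlen : 3 ≤ P.length) (hA : (G.neighborFinset x \ H).Nonempty)
    (hB : (G.neighborFinset y \ H).Nonempty)
    (h2 : 2 ≤ (G.neighborFinset x \ H ∪ G.neighborFinset y \ H).card) :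
    2 * ((G.neighborFinset x \ H).card + (G.neighborFinset y \ H).card) + 2 * P.length ≤
      n + 6 := by
  have hAC := hH.neighborFinset_sdiff_subset h.toIsCycleMap hx
  have hBC := hH.neighborFinset_sdiff_subset h.toIsCycleMap hy
  have hAx (v) (hv : v ∈ G.neighborFinset x \ H) : G.Adj x v := by
    simpa using (Finset.mem_sdiff.1 hv).1
  have hBy (v) (hv : v ∈ G.neighborFinset y \ H) : G.Adj y v := by
    simpa using (Finset.mem_sdiff.1 hv).1
  set A := G.neighborFinset x \ H
  set B := G.neighborFinset y \ H
  have hABC := Finset.union_subset hAC hBC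
  have hPc (v) (hv : v ∈ P) : v ∉ Set.range c := hH.notMem_range v (hPH v hv)
  have hgaps := h.mul_card_add_mul_card_gapStarts_le hABC (R := Crosses A B) (a := 2)
    (k := P.length - 1) (fun i j => hH.two_le_sub_of_isNext h hABC (fun m hm => by
      rcases Finset.mem_union.1 hm with hm | hm
      exacts [⟨x, hx, hAx m hm⟩, ⟨y, hy, hBy m hm⟩]) h2) fun i j hN hR => by
    have hji := h.lt_add_of_isNext hABC h2 hN
    rcases hR with ⟨hi, hj⟩ | ⟨hi, hj⟩
    · have := h.length_lt_sub hP hPc hN.lt hji (hAx _ hi).symm (hBy _ hj)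
      omega
    · have := h.length_lt_sub hP.reverse (by simpa using hPc) hN.lt hji (hBy _ hi).symm (hAx _ hj)
      rw [List.length_reverse] at this
      omega
  have hinter := Finset.card_le_card (h.inter_subset_gapStarts_crosses (B := B) hAC)
  have htwo := h.two_le_card_gapStarts_crosses hAC hBC hA hB h2
  have hunion := Finset.card_union_add_card_inter A B
  obtain ⟨k, hk⟩ : ∃ k, P.length = k + 3 := ⟨P.length - 3, by omega⟩
  rw [hk] at hgaps ⊢
  have := Nat.mul_le_mul_left k htwo
  rw [show k + 3 - 1 = k + 2 from rfl, add_mul] at hgaps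
  omega

theorem card_neighbors_in_ge (hH : IsComponentOff G c H) (h : IsLongestCycleMap G c n)
    (h3 : KConnected G 3) (hδ : Fintype.card V + 6 ≤ 4 * G.minDegree) (hcard : 2 ≤ H.card)
    (hx : x ∈ H) (hy : y ∈ H) (hP : IsListPath G P x y) (hPH : ∀ v ∈ P, v ∈ H)
    (hlen : 3 ≤ P.length) :
    H.card + 2 * P.length ≤
        2 * ((G.neighborFinset x ∩ H).card + (G.neighborFinset y ∩ H).card) ∨
      H.card + 2 ≤ (G.neighborFinset x ∩ H).card + (G.neighborFinset y ∩ H).card := by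
  have hx_out := hH.card_neighbors_outside_le h h3 hcard hx
  have hy_out := hH.card_neighbors_outside_le h h3 hcard hy
  have hx_deg := card_neighborFinset_inter_add_sdiff G H x
  have hy_deg := card_neighborFinset_inter_add_sdiff G H y
  have := G.minDegree_le_degree x
  have := G.minDegree_le_degree y
  have := hH.card_add_card_le h.toIsCycleMap
  by_cases hA : (G.neighborFinset x \ H).Nonempty
  · by_cases hB : (G.neighborFinset y \ H).Nonempty
    · by_cases h2 : 2 ≤ (G.neighborFinset x \ H ∪ G.neighborFinset y \ H).card
      · have := hH.two_mul_card_neighbors_off_add_le h hx hy hP hPH hlen hA hB h2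
        omega
      · have := Finset.card_le_card (Finset.subset_union_left (s₁ := G.neighborFinset x \ H)
          (s₂ := G.neighborFinset y \ H))
        have := Finset.card_le_card (Finset.subset_union_right (s₁ := G.neighborFinset x \ H)
          (s₂ := G.neighborFinset y \ H))
        omega
    · rw [Finset.not_nonempty_iff_eq_empty, ← Finset.card_eq_zero] at hB
      omega
  · rw [Finset.not_nonempty_iff_eq_empty, ← Finset.card_eq_zero] at hA
    omega

end IsComponentOff

theorem exists_mem_add_one_mem {a b : ℤ} {X Y : Finset ℤ} (hX : X ⊆ Finset.Ioc a b)
    (hY : Y ⊆ Finset.Ico a b) (hcard : (b - a).toNat < X.card + Y.card) :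
    ∃ k ∈ Y, k + 1 ∈ X := by
  have hX' : X.image (· - 1) ⊆ Finset.Ico a b := Finset.image_subset_iff.2 fun k hk => by
    have := Finset.mem_Ioc.1 (hX hk)
    exact Finset.mem_Ico.2 ⟨by omega, by omega⟩
  rw [← Finset.card_image_of_injective X (sub_left_injective (b := 1)), ← Int.card_Ico] at hcard
  obtain ⟨k, hk⟩ := Finset.inter_nonempty_of_card_lt_card_add_card hX' hY hcard
  rw [Finset.mem_inter, Finset.mem_image] at hk
  obtain ⟨⟨m, hm, rfl⟩, hk⟩ := hk
  exact ⟨m - 1, hk, by simpa using hm⟩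

namespace IsListPath
variable {G : SimpleGraph V} {l : List V} {a b : V} {k : ℕ}

theorem take (h : IsListPath G l a b) (hk : k < l.length) :
    IsListPath G (l.take (k + 1)) a l[k] where
  isChain := h.isChain.take _
  nodup := h.nodup.take
  head? := by rw [List.head?_take, if_neg k.succ_ne_zero, h.head?]
  getLast? := by simp [List.getLast?_take, hk]

theorem drop (h : IsListPath G l a b) (hk : k < l.length) :
    IsListPath G (l.drop k) l[k] b where
  isChain := h.isChain.drop _
  nodup := h.nodup.drop
  head? := by simp [hk]
  getLast? := by simp [List.getLast?_drop, hk, h.getLast?]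

variable {A B : Finset V}

theorem length_le_card (h : IsListPath G l a b) {H : Finset V} (hH : ∀ v ∈ l, v ∈ H) :
    l.length ≤ H.card := by
  classical
  rw [← List.toFinset_card_of_nodup h.nodup]
  exact Finset.card_le_card fun v hv => hH v (List.mem_toFinset.1 hv)

theorem exists_adj_adj_getElem (h : IsListPath G l a b) (hA : ∀ v ∈ A, G.Adj a v ∧ v ∈ l)
    (hB : ∀ v ∈ B, G.Adj b v ∧ v ∈ l) (hcard : l.length ≤ A.card + B.card) :
    ∃ (k : ℕ) (hk : k + 1 < l.length), G.Adj b l[k] ∧ G.Adj a l[k + 1] := by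
  classical
  have himage (F : Finset V) (hF : ∀ v ∈ F, v ∈ l) :
      (F.image fun v => (l.idxOf v : ℤ)).card = F.card :=
    Finset.card_image_of_injOn fun u hu v _ huv =>
      (List.idxOf_inj (hF u hu)).1 (Int.ofNat_injective huv)
  have hX : (A.image fun v => (l.idxOf v : ℤ)) ⊆ Finset.Ioc 0 (l.length - 1) := by
    refine Finset.image_subset_iff.2 fun u hu => Finset.mem_Ioc.2 ?_
    have hul := List.idxOf_lt_length_iff.2 (hA u hu).2
    have hne : l.idxOf u ≠ 0 := fun h0 => (hA u hu).1.ne <| by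
      rw [← h.getElem_zero, ← List.getElem_idxOf hul]
      simp only [h0]
    omega
  have hY : (B.image fun v => (l.idxOf v : ℤ)) ⊆ Finset.Ico 0 (l.length - 1) := by
    refine Finset.image_subset_iff.2 fun v hv => Finset.mem_Ico.2 ?_
    have hvl := List.idxOf_lt_length_iff.2 (hB v hv).2
    have hne : l.idxOf v ≠ l.length - 1 := fun h1 => (hB v hv).1.ne <| by
      rw [← h.getElem_length_sub_one, ← List.getElem_idxOf hvl]
      simp only [h1]
    omega
  have hl := h.length_pos
  obtain ⟨k, hk, hk'⟩ := exists_mem_add_one_mem hX hY <| by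
    rw [himage A fun v hv => (hA v hv).2, himage B fun v hv => (hB v hv).2]
    omega
  obtain ⟨v, hv, rfl⟩ := Finset.mem_image.1 hk
  obtain ⟨u, hu, huv⟩ := Finset.mem_image.1 hk'
  have huv : l.idxOf u = l.idxOf v + 1 := by omega
  refine ⟨l.idxOf v, huv ▸ List.idxOf_lt_length_iff.2 (hA u hu).2, ?_, ?_⟩
  · rw [List.getElem_idxOf]
    exact (hB v hv).1
  · simp only [← huv, List.getElem_idxOf]
    exact (hA u hu).1

theorem exists_perm_adj (h : IsListPath G l a b) (hA : ∀ v ∈ A, G.Adj a v ∧ v ∈ l)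
    (hB : ∀ v ∈ B, G.Adj b v ∧ v ∈ l) (hcard : l.length ≤ A.card + B.card) :
    ∃ l' a' b', IsListPath G l' a' b' ∧ l'.Perm l ∧ G.Adj b' a' := by
  obtain ⟨k, hk, hbk, hak⟩ := h.exists_adj_adj_getElem hA hB hcard
  refine ⟨_, _, _, (h.take (by omega)).append (h.drop hk).reverse hbk.symm ?_, ?_, hak.symm⟩
  · rw [List.disjoint_reverse_right]
    exact List.disjoint_take_drop h.nodup le_rfl
  · exact ((List.reverse_perm _).append_left _).trans (by rw [List.take_append_drop])

end IsListPath

/-- A longest one among the paths of `G` with all their vertices in `H`. -/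
structure IsLongestPathOn (G : SimpleGraph V) (H : Finset V) (l : List V) (a b : V) : Prop
    extends IsListPath G l a b where
  mem_of_mem : ∀ v ∈ l, v ∈ H
  length_le : ∀ l' a' b', IsListPath G l' a' b' → (∀ v ∈ l', v ∈ H) → l'.length ≤ l.length

theorem exists_isLongestPathOn (G : SimpleGraph V) {H : Finset V} (hH : H.Nonempty) :
    ∃ l a b, IsLongestPathOn G H l a b := by
  obtain ⟨v, hv⟩ := hH
  let s := {k | ∃ l a b, IsListPath G l a b ∧ (∀ v ∈ l, v ∈ H) ∧ l.length = k}
  have hs : BddAbove s := by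
    refine ⟨H.card, ?_⟩
    rintro _ ⟨l, a, b, hl, hlH, rfl⟩
    exact hl.length_le_card hlH
  obtain ⟨l, a, b, hl, hlH, hk⟩ :=
    Nat.sSup_mem (s := s) ⟨1, [v], v, v, .singleton G v, by simpa using hv, rfl⟩ hs
  exact ⟨l, a, b, hl, hlH, fun l' a' b' hl' hlH' =>
    hk ▸ le_csSup hs ⟨l', a', b', hl', hlH', rfl⟩⟩

namespace IsLongestPathOn
variable {G : SimpleGraph V} {H : Finset V} {l : List V} {a b v : V}

theorem reverse (h : IsLongestPathOn G H l a b) : IsLongestPathOn G H l.reverse b a where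
  toIsListPath := h.toIsListPath.reverse
  mem_of_mem v hv := h.mem_of_mem v (List.mem_reverse.1 hv)
  length_le := by simpa using h.length_le

theorem mem_of_adj_right (h : IsLongestPathOn G H l a b) (hv : v ∈ H) (hbv : G.Adj b v) :
    v ∈ l := by
  by_contra hvl
  have hlen := h.length_le _ _ _
    (h.toIsListPath.append (.singleton G v) hbv (List.disjoint_singleton.2 hvl))
    (by simpa [or_imp, forall_and, hv] using h.mem_of_mem)
  rw [List.length_append, List.length_singleton] at hlen
  omega

theorem mem_of_adj_left (h : IsLongestPathOn G H l a b) (hv : v ∈ H) (hav : G.Adj a v) : v ∈ l :=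
  List.mem_reverse.1 (h.reverse.mem_of_adj_right hv hav)

theorem exists_adj_of_notMem (h : IsLongestPathOn G H l a b)
    (hH : (G.induce (H : Set V)).Preconnected) (hv : v ∈ H) (hvl : v ∉ l) :
    ∃ u ∈ l, ∃ w ∈ H, w ∉ l ∧ G.Adj u w := by
  obtain ⟨p⟩ := hH ⟨a, h.mem_of_mem a h.left_mem⟩ ⟨v, hv⟩
  obtain ⟨d, -, hd, hd'⟩ := p.exists_boundary_dart {u | u.1 ∈ l} h.left_mem hvl
  exact ⟨d.fst, hd, d.snd, d.snd.2, hd', d.adj⟩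

theorem three_le_length (h : IsLongestPathOn G H l a b)
    (hH : (G.induce (H : Set V)).Preconnected) (hcard : 3 ≤ H.card) : 3 ≤ l.length := by
  classical
  by_contra! hlen
  obtain ⟨v, hv, hvl⟩ : ∃ v ∈ H, v ∉ l.toFinset :=
    Finset.exists_mem_notMem_of_card_lt_card ((List.toFinset_card_le l).trans_lt (by omega))
  obtain ⟨u, hu, w, hw, hwl, huw⟩ := h.exists_adj_of_notMem hH hv (by simpa using hvl)
  obtain ⟨k, hk, rfl⟩ := List.getElem_of_mem hu
  rcases Nat.eq_zero_or_pos k with rfl | hk0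
  · exact hwl (h.mem_of_adj_left hw (h.getElem_zero ▸ huw))
  · obtain rfl : k = l.length - 1 := by omega
    exact hwl (h.mem_of_adj_right hw (h.getElem_length_sub_one ▸ huw))

theorem mem_of_isCycleMap (h : IsLongestPathOn G H l a b)
    (hH : (G.induce (H : Set V)).Preconnected) {d : ℤ → V} (hd : IsCycleMap G d l.length)
    (hdl : ∀ v, v ∈ Set.range d ↔ v ∈ l) (hv : v ∈ H) : v ∈ l := by
  by_contra hvl
  obtain ⟨u, hu, w, hw, hwl, huw⟩ := h.exists_adj_of_notMem hH hv hvl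
  obtain ⟨i, rfl⟩ := (hdl u).2 hu
  have := hd.three_le
  have harc := hd.isListPath_arc (i := i + 1) (j := i + l.length) (by omega) (by omega)
  rw [hd.apply_add] at harc
  have hmem {x} (hx : x ∈ arc d (i + 1) (i + l.length)) : x ∈ l :=
    (hdl x).1 (mem_range_of_mem_arc hx)
  have hlen := h.length_le _ _ _
    (harc.append (.singleton G w) huw (List.disjoint_singleton.2 fun hw' => hwl (hmem hw')))
    (by simpa [or_imp, forall_and, hw] using fun x hx => h.mem_of_mem x (hmem hx))
  rw [List.length_append, length_arc, List.length_singleton] at hlen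
  omega

end IsLongestPathOn

theorem IsCycleMap.exists_isListPath_of_chords {G : SimpleGraph V} {c : ℤ → V} {n : ℕ}
    {i j k : ℤ} (h : IsCycleMap G c n) (hik : i < k) (hkj : k < j) (hji : j < i + n)
    (hjk : G.Adj (c (j + 1)) (c k)) (hik' : G.Adj (c (i + 1)) (c (k + 1))) :
    ∃ P, IsListPath G P (c i) (c j) ∧ (∀ v ∈ P, v ∈ Set.range c) ∧ P.length = n := by
  have h₁ := (h.isListPath_arc (i := j + 1) (j := i + n) (by omega) (by omega)).reverse
  have h₂ := (h.isListPath_arc (i := i + 1) (j := k) (by omega) (by omega)).reverse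
  have h₃ := h.isListPath_arc (i := k + 1) (j := j) (by omega) (by omega)
  rw [h.apply_add] at h₁
  refine ⟨_, (h₁.append h₂ hjk ?_).append h₃ hik' ?_, fun v hv => ?_, ?_⟩
  · rw [List.disjoint_reverse_left, List.disjoint_reverse_right]
    exact (h.disjoint_arc (by omega) (by omega)).symm
  · rw [List.disjoint_append_left, List.disjoint_reverse_left, List.disjoint_reverse_left]
    exact ⟨(h.disjoint_arc (by omega) (by omega)).symm, h.disjoint_arc (by omega) (by omega)⟩
  · simp only [List.mem_append, List.mem_reverse] at hv
    rcases hv with (hv | hv) | hv <;> exact mem_range_of_mem_arc hv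
  · simp only [List.length_append, List.length_reverse, length_arc]
    omega

section
variable [Fintype V] [DecidableEq V] {G : SimpleGraph V} [DecidableRel G.Adj]

theorem exists_isCycleMap_range_eq {H : Finset V} (hH : (G.induce (H : Set V)).Preconnected)
    (hcard : 3 ≤ H.card)
    (hdeg : ∀ x ∈ H, ∀ y ∈ H, ∀ P, IsListPath G P x y → (∀ v ∈ P, v ∈ H) → 3 ≤ P.length →
      P.length ≤ (G.neighborFinset x ∩ H).card + (G.neighborFinset y ∩ H).card) :
    ∃ d, IsCycleMap G d H.card ∧ Set.range d = H := by
  obtain ⟨l, a, b, h⟩ := exists_isLongestPathOn G (Finset.card_pos.1 (by omega : 0 < H.card))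
  have hl := h.three_le_length hH hcard
  obtain ⟨l', a', b', hl', hperm, hba⟩ := h.exists_perm_adj (A := G.neighborFinset a ∩ H)
    (B := G.neighborFinset b ∩ H)
    (fun v hv => by
      rw [Finset.mem_inter, mem_neighborFinset] at hv
      exact ⟨hv.1, h.mem_of_adj_left hv.2 hv.1⟩)
    (fun v hv => by
      rw [Finset.mem_inter, mem_neighborFinset] at hv
      exact ⟨hv.1, h.mem_of_adj_right hv.2 hv.1⟩)
    (hdeg a (h.mem_of_mem a h.left_mem) b (h.mem_of_mem b h.right_mem) l h.toIsListPath
      h.mem_of_mem hl)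
  obtain ⟨d, hd, hdl⟩ := exists_isCycleMap hl' hba (hperm.length_eq ▸ hl)
  rw [hperm.length_eq] at hd
  simp only [hperm.mem_iff] at hdl
  have hlH : l.toFinset = H := by
    ext v
    rw [List.mem_toFinset]
    exact ⟨h.mem_of_mem v, h.mem_of_isCycleMap hH hd hdl⟩
  refine ⟨d, ?_, ?_⟩
  · rwa [← hlH, List.toFinset_card_of_nodup h.nodup]
  · ext v
    rw [hdl, ← hlH, Finset.mem_coe, List.mem_toFinset]

namespace IsCycleMap
variable {c : ℤ → V} {n : ℕ} {i j : ℤ}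

theorem exists_isListPath_of_lt_card_positions (h : IsCycleMap G c n) (hij : i < j)
    (hji : j < i + n) (hcard : j - i < (positions c (G.neighborFinset (c (i + 1))) i j).card +
      (positions c (G.neighborFinset (c (j + 1))) i j).card) :
    ∃ P, IsListPath G P (c i) (c j) ∧ (∀ v ∈ P, v ∈ Set.range c) ∧ P.length = n := by
  have herase := Finset.pred_card_le_card_erase
    (s := positions c (G.neighborFinset (c (j + 1))) i j) (a := j)
  have hX : positions c (G.neighborFinset (c (i + 1))) i j ⊆ Finset.Ioc (i + 1) j := fun k hk => by
    rw [mem_positions, mem_neighborFinset] at hk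
    have : k ≠ i + 1 := by rintro rfl; exact hk.2.ne rfl
    rw [Finset.mem_Ioc]
    omega
  have hY : (positions c (G.neighborFinset (c (j + 1))) i j).erase j ⊆ Finset.Ico (i + 1) j :=
    fun k hk => by
      rw [Finset.mem_erase, mem_positions] at hk
      rw [Finset.mem_Ico]
      omega
  obtain ⟨k, hk, hk'⟩ := exists_mem_add_one_mem hX hY (by omega)
  simp only [Finset.mem_erase, mem_positions, mem_neighborFinset] at hk hk'
  exact h.exists_isListPath_of_chords hk.2.1.1 (by omega) hji hk.2.2 hk'.2

theorem exists_isListPath_length_eq (h : IsCycleMap G c n)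
    (hdeg : ∀ x ∈ Set.range c, ∀ y ∈ Set.range c, x ≠ y → n + 1 ≤
      (G.neighborFinset x ∩ cycleVerts c n).card + (G.neighborFinset y ∩ cycleVerts c n).card)
    {s t : V} (hs : s ∈ Set.range c) (ht : t ∈ Set.range c) (hst : s ≠ t) :
    ∃ P, IsListPath G P s t ∧ (∀ v ∈ P, v ∈ Set.range c) ∧ P.length = n := by
  obtain ⟨i, rfl⟩ := hs
  obtain ⟨j₀, rfl⟩ := ht
  obtain ⟨j, ⟨hij, hji⟩, hj⟩ := h.exists_index_Ioc j₀ i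
  rw [← hj] at hst ⊢
  have hji : j < i + n := hji.lt_of_ne fun he => hst (he ▸ h.apply_add i).symm
  have hsum := hdeg _ ⟨i + 1, rfl⟩ _ ⟨j + 1, rfl⟩ (h.ne (by omega) (by omega))
  simp only [← h.card_positions _ i, ← card_positions_add hij.le hji.le] at hsum
  by_cases hcard : j - i < (positions c (G.neighborFinset (c (i + 1))) i j).card +
      (positions c (G.neighborFinset (c (j + 1))) i j).card
  · exact h.exists_isListPath_of_lt_card_positions hij hji hcard
  · obtain ⟨P, hP, hPc, hlen⟩ := h.exists_isListPath_of_lt_card_positions (i := j) (j := i + n)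
      hji (by omega) (by rw [add_right_comm i (n : ℤ), h.apply_add]; omega)
    rw [h.apply_add] at hP
    exact ⟨P.reverse, hP.reverse, by simpa using hPc, by simpa using hlen⟩

end IsCycleMap

end

/-- `s` is the only neighbour of `m` in `H`. -/
structure IsSoleNeighborIn (G : SimpleGraph V) (H : Finset V) (s m : V) : Prop where
  mem : s ∈ H
  adj : G.Adj s m
  eq_of_adj : ∀ t ∈ H, G.Adj t m → t = s

/-- `u` and `w` have distinct neighbours in `H`, so that a path through a connected set `H` joins
them with at least two inner vertices. -/
def HaveDistinctNeighborsIn (G : SimpleGraph V) (H : Finset V) (u w : V) : Prop :=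
  ∃ s ∈ H, ∃ t ∈ H, s ≠ t ∧ G.Adj s u ∧ G.Adj t w

section
variable {G : SimpleGraph V} {H : Finset V} {s r u w : V}

theorem isSoleNeighborIn_right (hR : ¬ HaveDistinctNeighborsIn G H u w) (hs : s ∈ H)
    (hsu : G.Adj s u) (hr : r ∈ H) (hrw : G.Adj r w) : IsSoleNeighborIn G H s w := by
  have hw (t) (ht : t ∈ H) (htw : G.Adj t w) : t = s :=
    by_contra fun hne => hR ⟨s, hs, t, ht, Ne.symm hne, hsu, htw⟩
  exact ⟨hs, hw r hr hrw ▸ hrw, hw⟩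

theorem isSoleNeighborIn_left (hR : ¬ HaveDistinctNeighborsIn G H u w) (hs : s ∈ H)
    (hsu : G.Adj s u) (hr : r ∈ H) (hrw : G.Adj r w) : IsSoleNeighborIn G H s u where
  mem := hs
  adj := hsu
  eq_of_adj t ht htu := by_contra fun hne =>
    hR ⟨t, ht, s, hs, hne, htu, (isSoleNeighborIn_right hR hs hsu hr hrw).adj⟩

end

theorem IsCycleMap.exists_isListPath_add_two_le {G : SimpleGraph V} {c : ℤ → V} {n : ℕ}
    (h : IsCycleMap G c n) {s t : V} (hs : s ∈ Set.range c) (ht : t ∈ Set.range c) (hst : s ≠ t) :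
    ∃ P, IsListPath G P s t ∧ (∀ v ∈ P, v ∈ Set.range c) ∧ n + 2 ≤ 2 * P.length := by
  obtain ⟨i, rfl⟩ := hs
  obtain ⟨j₀, rfl⟩ := ht
  obtain ⟨j, ⟨hij, hji⟩, hj⟩ := h.exists_index_Ioc j₀ i
  rw [← hj] at hst ⊢
  have hji : j < i + n := hji.lt_of_ne fun he => hst (he ▸ h.apply_add i).symm
  by_cases hlong : (n : ℤ) ≤ 2 * (j - i)
  · refine ⟨_, h.isListPath_arc hij.le hji, fun v => mem_range_of_mem_arc, ?_⟩
    rw [length_arc]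
    omega
  · have harc := h.isListPath_arc hji.le (by omega)
    rw [h.apply_add] at harc
    refine ⟨_, harc.reverse, fun v hv => mem_range_of_mem_arc (List.mem_reverse.1 hv), ?_⟩
    rw [List.length_reverse, length_arc]
    omega

theorem card_neighborFinset_inter_add_one_le [Fintype V] [DecidableEq V] {G : SimpleGraph V}
    [DecidableRel G.Adj] {H : Finset V} {x : V} (hx : x ∈ H) :
    (G.neighborFinset x ∩ H).card + 1 ≤ H.card := by
  refine Finset.card_lt_card ⟨Finset.inter_subset_right, fun hsub => ?_⟩
  exact G.loopless.irrefl x ((G.mem_neighborFinset x x).1 (Finset.mem_inter.1 (hsub hx)).1)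

namespace IsComponentOff
variable [DecidableEq V] {G : SimpleGraph V} [DecidableRel G.Adj] {c : ℤ → V} {n : ℕ}
  {H : Finset V} {s t m x y : V}

theorem mem_attachments_of_adj (hH : IsComponentOff G c H) (h : IsCycleMap G c n) (hs : s ∈ H)
    (hm : m ∉ H) (hsm : G.Adj s m) : m ∈ attachments G c n H :=
  mem_attachments.2
    ⟨h.mem_cycleVerts.2 ((hH.mem_or_mem_range s hs m hsm).resolve_left hm), s, hs, hsm⟩

/-- Outside the gap starts, being the sole attachment is passed on from one vertex of attachment to
the next, and so around the whole cycle. -/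
theorem forall_isSoleNeighborIn (h : IsCycleMap G c n) (hs : s ∈ H)
    (hF : ∀ m ∈ gapStarts c (attachments G c n H) (HaveDistinctNeighborsIn G H),
      ¬ IsSoleNeighborIn G H s m)
    (hm : m ∈ attachments G c n H)
    (hmF : m ∉ gapStarts c (attachments G c n H) (HaveDistinctNeighborsIn G H))
    (hsm : G.Adj s m) : ∀ v ∈ attachments G c n H, IsSoleNeighborIn G H s v := by
  have hsub : attachments G c n H ⊆ cycleVerts c n := Finset.filter_subset _ _
  refine h.forall_mem_of_isNext hsub (fun i j hi hsi hN => ?_) hm ?_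
  · obtain ⟨r, hr, hrj⟩ := (mem_attachments.1 hN.mem).2
    exact isSoleNeighborIn_right (fun hR => hF _ ((h.mem_gapStarts hN).2 ⟨hi, hR⟩) hsi) hs hsi.adj
      hr hrj
  · obtain ⟨i, rfl⟩ := h.mem_cycleVerts.1 (hsub hm)
    obtain ⟨j, -, hN⟩ := h.exists_isNext hm i
    obtain ⟨r, hr, hrj⟩ := (mem_attachments.1 hN.mem).2
    exact isSoleNeighborIn_left (fun hR => hmF ((h.mem_gapStarts hN).2 ⟨hm, hR⟩)) hs hsm hr hrj

theorem two_mul_card_attachments_add_le (hH : IsComponentOff G c H) (h : IsLongestCycleMap G c n)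
    (hM : 2 ≤ (attachments G c n H).card)
    (hspan : ∀ s ∈ H, ∀ t ∈ H, s ≠ t →
      ∃ P, IsListPath G P s t ∧ (∀ v ∈ P, v ∈ H) ∧ P.length = H.card) :
    2 * (attachments G c n H).card + (H.card - 1) *
      (gapStarts c (attachments G c n H) (HaveDistinctNeighborsIn G H)).card ≤ n := by
  have hsub : attachments G c n H ⊆ cycleVerts c n := Finset.filter_subset _ _
  refine h.mul_card_add_mul_card_gapStarts_le hsub (fun i j hi hN => ?_) fun i j hN hR => ?_
  · exact hH.two_le_sub_of_isNext h hsub (fun m hm => (mem_attachments.1 hm).2) hM hi hN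
  · obtain ⟨s, hs, t, ht, hst, hsi, htj⟩ := hR
    obtain ⟨P, hP, hPH, hlen⟩ := hspan s hs t ht hst
    have := h.length_lt_sub hP (fun v hv => hH.notMem_range v (hPH v hv)) hN.lt
      (h.lt_add_of_isNext hsub hM hN) hsi.symm htj
    have := Finset.card_pos.2 ⟨s, hs⟩
    push_cast
    omega

variable [Fintype V]

theorem exists_not_isSoleNeighborIn (hH : IsComponentOff G c H) (h : IsCycleMap G c n)
    (h3 : KConnected G 3) (hcard : 2 ≤ H.card) (hs : s ∈ H) :
    ∃ m ∈ attachments G c n H, ¬ IsSoleNeighborIn G H s m := by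
  obtain ⟨p, hp, hps⟩ := Finset.exists_mem_ne hcard s
  have hc : c 0 ∉ H := fun hm => hH.notMem_range _ hm ⟨0, rfl⟩
  obtain ⟨t, ht, m, hm, hts, -, htm⟩ := h3.exists_adj (T := {s}) (by simp) hp (by simpa using hps)
    hc (by rw [Finset.mem_singleton]; rintro rfl; exact hc hs)
  exact ⟨m, hH.mem_attachments_of_adj h ht hm htm,
    fun hsole => hts (Finset.mem_singleton.2 (hsole.eq_of_adj t ht htm))⟩

/-- Apply 3-connectivity to the set obtained from `F` by replacing each `m ∈ F` that has a sole
neighbour in `H` by that neighbour. -/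
theorem exists_adj_notMem_of_card_le_two (hH : IsComponentOff G c H) (h : IsCycleMap G c n)
    (h3 : KConnected G 3) (hcard : 3 ≤ H.card) {F : Finset V} (hF : F.card ≤ 2) :
    ∃ s ∈ H, ∃ m ∈ attachments G c n H,
      m ∉ F ∧ G.Adj s m ∧ ∀ v ∈ F, ¬ IsSoleNeighborIn G H s v := by
  have hf (v : V) : ∃ r, (∀ s, IsSoleNeighborIn G H s v → r = s) ∧
      ((∀ s, ¬ IsSoleNeighborIn G H s v) → r = v) := by
    by_cases hv : ∃ s, IsSoleNeighborIn G H s v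
    · obtain ⟨s, hs⟩ := hv
      exact ⟨s, fun t ht => ht.eq_of_adj s hs.mem hs.adj, fun hno => (hno s hs).elim⟩
    · exact ⟨v, fun s hs => (hv ⟨s, hs⟩).elim, fun _ => rfl⟩
  choose f hf_sole hf_self using hf
  have hT : (F.image f).card < 3 := Finset.card_image_le.trans_lt (by omega)
  obtain ⟨p, hp, hpT⟩ := Finset.exists_mem_notMem_of_card_lt_card (hT.trans_le hcard)
  obtain ⟨q, hq, hqT⟩ := Finset.exists_mem_notMem_of_card_lt_card
    (hT.trans_le (h.card_cycleVerts.symm ▸ h.three_le))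
  obtain ⟨s, hs, m, hm, hsT, hmT, hsm⟩ := h3.exists_adj hT hp hpT
    (fun hqH => Finset.disjoint_left.1 (hH.disjoint_cycleVerts h) hqH hq) hqT
  have hsF (v) (hv : v ∈ F) : ¬ IsSoleNeighborIn G H s v := fun hsole =>
    hsT (Finset.mem_image.2 ⟨v, hv, hf_sole v s hsole⟩)
  refine ⟨s, hs, m, hH.mem_attachments_of_adj h hs hm hsm, fun hmF => ?_, hsm, hsF⟩
  refine hmT (Finset.mem_image.2 ⟨m, hmF, hf_self m fun r hr => ?_⟩)
  exact hsF m hmF (hr.eq_of_adj s hs hsm ▸ hr)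

theorem three_le_card_gapStarts (hH : IsComponentOff G c H) (h : IsCycleMap G c n)
    (h3 : KConnected G 3) (hcard : 3 ≤ H.card) :
    3 ≤ (gapStarts c (attachments G c n H) (HaveDistinctNeighborsIn G H)).card := by
  by_contra! hlt
  obtain ⟨s, hs, m, hm, hmF, hsm, hsF⟩ :=
    hH.exists_adj_notMem_of_card_le_two h h3 hcard (Nat.le_of_lt_succ hlt)
  obtain ⟨v, hv, hsv⟩ := hH.exists_not_isSoleNeighborIn h h3 (by omega) hs
  exact hsv (forall_isSoleNeighborIn h hs hsF hm hmF hsm v hv)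

theorem neighborFinset_sdiff_subset_attachments (hH : IsComponentOff G c H) (h : IsCycleMap G c n)
    (hx : x ∈ H) : G.neighborFinset x \ H ⊆ attachments G c n H := fun v hv => by
  rw [Finset.mem_sdiff, mem_neighborFinset] at hv
  exact hH.mem_attachments_of_adj h hx hv.2 hv.1

theorem inter_subset_gapStarts (hH : IsComponentOff G c H) (h : IsCycleMap G c n) (hx : x ∈ H)
    (hy : y ∈ H) (hxy : x ≠ y) : (G.neighborFinset x \ H) ∩ (G.neighborFinset y \ H) ⊆
      gapStarts c (attachments G c n H) (HaveDistinctNeighborsIn G H) := by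
  intro m hm
  rw [Finset.mem_inter] at hm
  have hmM := hH.neighborFinset_sdiff_subset_attachments h hx hm.1
  obtain ⟨i, rfl⟩ := h.mem_cycleVerts.1 (mem_attachments.1 hmM).1
  obtain ⟨j, -, hN⟩ := h.exists_isNext hmM i
  obtain ⟨t, ht, htj⟩ := (mem_attachments.1 hN.mem).2
  simp only [Finset.mem_sdiff, mem_neighborFinset] at hm
  refine (h.mem_gapStarts hN).2 ⟨hmM, ?_⟩
  by_cases hxt : x = t
  · exact ⟨y, hy, t, ht, hxt ▸ hxy.symm, hm.2.1, htj⟩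
  · exact ⟨x, hx, t, ht, hxt, hm.1.1, htj⟩

theorem exists_isListPath_length_eq (hH : IsComponentOff G c H) (h : IsLongestCycleMap G c n)
    (h3 : KConnected G 3) (hδ : Fintype.card V + 6 ≤ 4 * G.minDegree) (hcard : 3 ≤ H.card)
    (hs : s ∈ H) (ht : t ∈ H) (hst : s ≠ t) :
    ∃ P, IsListPath G P s t ∧ (∀ v ∈ P, v ∈ H) ∧ P.length = H.card := by
  obtain ⟨d, hd, hdH⟩ := exists_isCycleMap_range_eq hH.preconnected hcard
    fun x hx y hy P hP hPH hlen => by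
      have := hP.length_le_card hPH
      have := hH.card_neighbors_in_ge h h3 hδ (by omega) hx hy hP hPH hlen
      omega
  have hdH' : cycleVerts d H.card = H := by
    ext v
    rw [hd.mem_cycleVerts, hdH, Finset.mem_coe]
  have hmem (v) : v ∈ Set.range d ↔ v ∈ H := by rw [hdH, Finset.mem_coe]
  simp only [← hmem] at hs ht
  simp only [← hmem]
  refine hd.exists_isListPath_length_eq (fun x hx y hy hxy => ?_) hs ht hst
  obtain ⟨P, hP, hPH, hlen⟩ := hd.exists_isListPath_add_two_le hx hy hxy
  simp only [hmem] at hx hy hPH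
  have := hH.card_neighbors_in_ge h h3 hδ (by omega) hx hy hP hPH (by omega)
  rw [hdH']
  omega

theorem card_le_two (hH : IsComponentOff G c H) (h : IsLongestCycleMap G c n)
    (h3 : KConnected G 3) (hδ : Fintype.card V + 6 ≤ 4 * G.minDegree) : H.card ≤ 2 := by
  by_contra! hcard
  obtain ⟨x, hx, y, hy, hxy⟩ := Finset.one_lt_card.1 (by omega : 1 < H.card)
  have hgap := hH.three_le_card_gapStarts h.toIsCycleMap h3 hcard
  have hM := hgap.trans (Finset.card_le_card gapStarts_subset)
  have hle := hH.two_mul_card_attachments_add_le h (by omega)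
    fun s hs t ht => hH.exists_isListPath_length_eq h h3 hδ hcard hs ht
  have hinter := Finset.card_le_card (hH.inter_subset_gapStarts h.toIsCycleMap hx hy hxy)
  have hunion := Finset.card_le_card (Finset.union_subset
    (hH.neighborFinset_sdiff_subset_attachments h.toIsCycleMap hx)
    (hH.neighborFinset_sdiff_subset_attachments h.toIsCycleMap hy))
  have := Finset.card_union_add_card_inter (G.neighborFinset x \ H) (G.neighborFinset y \ H)
  have := card_neighborFinset_inter_add_sdiff G H x
  have := card_neighborFinset_inter_add_sdiff G H y
  have := G.minDegree_le_degree x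
  have := G.minDegree_le_degree y
  have := card_neighborFinset_inter_add_one_le (G := G) hx
  have := card_neighborFinset_inter_add_one_le (G := G) hy
  have := hH.card_add_card_le h.toIsCycleMap
  obtain ⟨k, hk⟩ := Nat.exists_eq_add_of_le' hcard
  rw [hk, show k + 3 - 1 = k + 2 by omega, add_mul] at hle
  have := Nat.mul_le_mul_left k hgap
  omega

end IsComponentOff

/-- The set obtained from `F`, a set of vertices of the cycle `c` of length `n`, by moving every
vertex `k` steps along the cycle. -/
noncomputable def cycleShift [DecidableEq V] (c : ℤ → V) (n : ℕ) (k : ℤ) (F : Finset V) :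
    Finset V :=
  (positions c F 0 n).image fun i => c (i + k)

namespace IsCycleMap
variable [DecidableEq V] {G : SimpleGraph V} {c : ℤ → V} {n : ℕ} {M S F : Finset V} {i j k : ℤ}
  {R : V → V → Prop}

theorem apply_mem_cycleShift (h : IsCycleMap G c n) :
    c i ∈ cycleShift c n k F ↔ c (i - k) ∈ F := by
  simp only [cycleShift, Finset.mem_image, mem_positions]
  constructor
  · rintro ⟨j, ⟨-, hj⟩, hji⟩
    have := h.apply_add_eq hji (-k)
    rw [add_neg_cancel_right, ← sub_eq_add_neg] at this
    exact this ▸ hj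
  · intro hi
    obtain ⟨j, hj, hji⟩ := h.exists_index_Ioc (i - k) 0
    refine ⟨j, ⟨by simpa using hj, hji ▸ hi⟩, ?_⟩
    simpa using h.apply_add_eq hji k

theorem cycleShift_subset (h : IsCycleMap G c n) : cycleShift c n k F ⊆ cycleVerts c n := by
  intro v hv
  obtain ⟨i, -, rfl⟩ := Finset.mem_image.1 hv
  exact h.mem_cycleVerts.2 ⟨i + k, rfl⟩

theorem card_cycleShift (h : IsCycleMap G c n) (hF : F ⊆ cycleVerts c n) :
    (cycleShift c n k F).card = F.card := by
  rw [cycleShift, Finset.card_image_of_injOn, ← zero_add (n : ℤ), h.card_positions,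
    Finset.inter_eq_left.2 hF]
  intro i hi j hj hij
  have := h.apply_add_eq hij (-k)
  simp only [add_neg_cancel_right] at this
  refine h.injOn_Ioc 0 ?_ ?_ this <;> simpa using (mem_positions.1 ‹_›).1

theorem cycleShift_comp_neg (h : IsCycleMap G c n) :
    cycleShift (fun i => c (-i)) n k F = cycleShift c n (-k) F := by
  have hmem (i : ℤ) : c i ∈ cycleShift (fun i => c (-i)) n k F ↔ c (i + k) ∈ F := by
    have := h.comp_neg.apply_mem_cycleShift (i := -i) (k := k) (F := F)
    rwa [neg_neg, neg_sub, sub_neg_eq_add, add_comm] at this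
  have hsub : cycleShift (fun i => c (-i)) n k F ⊆ cycleVerts c n :=
    h.cycleVerts_comp_neg ▸ h.comp_neg.cycleShift_subset
  ext v
  constructor <;> intro hv
  · obtain ⟨i, rfl⟩ := h.mem_cycleVerts.1 (hsub hv)
    rwa [h.apply_mem_cycleShift, sub_neg_eq_add, ← hmem]
  · obtain ⟨i, rfl⟩ := h.mem_cycleVerts.1 (h.cycleShift_subset hv)
    rwa [h.apply_mem_cycleShift, sub_neg_eq_add, ← hmem] at hv

/-- If no gap as described had an interior avoiding `S`, each gap of `M` whose ends are related by
`R` would have length at least `a + 2` or contain a vertex of `S` of its own. -/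
theorem exists_rel_add_forall_notMem (h : IsCycleMap G c n) (hM : M ⊆ cycleVerts c n) {a : ℕ}
    (ha : ∀ i j, c i ∈ M → IsNext c M i j → (a : ℤ) ≤ j - i)
    (hR : ∀ i j, IsNext c M i j → R (c i) (c j) → (a + 1 : ℤ) ≤ j - i)
    (hS : n + S.card < a * M.card + 2 * (gapStarts c M R).card) :
    ∃ i, IsNext c M i (i + (a + 1)) ∧ R (c i) (c (i + (a + 1))) ∧
      ∀ k, i < k → k < i + (a + 1) → c k ∉ S := by
  set F := gapStarts c M R
  set T := F ∩ cycleShift c n (-(a + 1 : ℤ)) M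
  have hmemT (i : ℤ) (hi : c i ∈ F) : c i ∈ T ↔ c (i + (a + 1)) ∈ M := by
    rw [Finset.mem_inter, h.apply_mem_cycleShift, sub_neg_eq_add, and_iff_right hi]
  have hsum := h.sum_gap_le hM
    (fun m => a + ((if m ∈ F then 1 else 0) + if m ∈ F \ T then 1 else 0)) fun i j hi hN => by
      have hai := ha i j hi hN
      by_cases hF : c i ∈ F
      · have hRi := hR i j hN ((h.mem_gapStarts hN).1 hF).2
        by_cases hT : c i ∈ T
        · simpa [hF, hT] using hRi
        · have hne : j ≠ i + (a + 1) := by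
            rintro rfl
            exact hT ((hmemT i hF).2 hN.mem)
          simp only [hF, hT, if_true, Finset.mem_sdiff, not_false_eq_true, and_self]
          push_cast
          omega
      · simpa [hF] using hai
  have hFM : F ⊆ M := gapStarts_subset
  rw [Finset.sum_add_distrib, Finset.sum_add_distrib, Finset.sum_const, Finset.sum_ite_mem,
    Finset.sum_ite_mem, Finset.inter_eq_right.2 hFM,
    Finset.inter_eq_right.2 (Finset.sdiff_subset.trans hFM), Finset.sum_const, Finset.sum_const,
    smul_eq_mul, smul_eq_mul, smul_eq_mul, mul_one, mul_one, mul_comm] at hsum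
  have hTF : T ⊆ F := Finset.inter_subset_left
  have := Finset.card_sdiff_add_card_eq_card hTF
  obtain ⟨i, j, hi, hN, hgap⟩ := h.exists_isNext_disjoint (A := S) hM (hTF.trans hFM) (by omega)
  have hRij := ((h.mem_gapStarts hN).1 (hTF hi)).2
  have hij := hR i j hN hRij
  have hji : j ≤ i + (a + 1) := by
    by_contra! hlt
    exact hN.notMem _ (by omega) hlt ((hmemT i (hTF hi)).1 hi)
  obtain rfl : j = i + (a + 1) := by omega
  exact ⟨i, hN, hRij, hgap⟩

end IsCycleMap

theorem exists_component_induce_compl [Finite V] (G : SimpleGraph V) {U : Set V} {v : V}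
    (hv : v ∉ U) :
    ∃ H : Finset V, v ∈ H ∧ (G.induce (H : Set V)).Preconnected ∧
      (∀ s ∈ H, ∀ w, G.Adj s w → w ∈ H ∨ w ∈ U) ∧ ∀ s ∈ H, s ∉ U := by
  let C := (G.induce Uᶜ).connectedComponentMk ⟨v, hv⟩
  have hfin : (Subtype.val '' C.supp).Finite := Set.toFinite _
  have hmem (w : V) : w ∈ hfin.toFinset ↔ ∃ hw : w ∉ U, ⟨w, hw⟩ ∈ C.supp := by
    simp
  refine ⟨hfin.toFinset, (hmem v).2 ⟨hv, rfl⟩, ?_, ?_, ?_⟩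
  · rw [hfin.coe_toFinset]
    let f : C.toSimpleGraph →g G.induce (Subtype.val '' C.supp) :=
      ⟨fun w => ⟨w.1.1, w.1, w.2, rfl⟩, fun h => h⟩
    refine C.connected_toSimpleGraph.preconnected.map f ?_
    rintro ⟨-, w, hw, rfl⟩
    exact ⟨⟨w, hw⟩, rfl⟩
  · intro s hs w hsw
    obtain ⟨hsU, hsC⟩ := (hmem s).1 hs
    refine or_iff_not_imp_right.2 fun hwU => (hmem w).2 ⟨hwU, ?_⟩
    have hadj : (G.induce Uᶜ).Adj ⟨s, hsU⟩ ⟨w, hwU⟩ := hsw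
    exact (C.mem_supp_congr_adj hadj).1 hsC
  · intro s hs
    exact ((hmem s).1 hs).1

theorem exists_isComponentOff [Finite V] (G : SimpleGraph V) {c : ℤ → V} {v : V}
    (hv : v ∉ Set.range c) : ∃ H, IsComponentOff G c H ∧ v ∈ H :=
  let ⟨H, hvH, hconn, hadj, hoff⟩ := exists_component_induce_compl G hv
  ⟨H, ⟨hconn, hadj, hoff⟩, hvH⟩

/-- Removing `S` separates `A` from `B`. The sets `A` and `B` are not required to avoid `S`. -/
structure IsSeparation (G : SimpleGraph V) (S A B : Finset V) : Prop where
  mem_or_mem : ∀ v, v ∈ S ∨ v ∈ A ∨ v ∈ B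
  disjoint : Disjoint A B
  not_adj : ∀ a ∈ A, ∀ b ∈ B, ¬ G.Adj a b
  nonempty_left : A.Nonempty
  nonempty_right : B.Nonempty

namespace IsSeparation
variable {G : SimpleGraph V} {S A B : Finset V} {u v : V}

theorem symm (h : IsSeparation G S A B) : IsSeparation G S B A :=
  ⟨fun v => (h.mem_or_mem v).imp_right Or.symm, h.disjoint.symm,
    fun b hb a ha hba => h.not_adj a ha b hb hba.symm, h.nonempty_right, h.nonempty_left⟩

theorem mem_or_mem_of_adj (h : IsSeparation G S A B) (hu : u ∈ A) (huv : G.Adj u v) :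
    v ∈ S ∨ v ∈ A :=
  (or_assoc.2 (h.mem_or_mem v)).resolve_right fun hv => h.not_adj u hu v hv huv

theorem mem_of_adj_of_adj {w : V} (h : IsSeparation G S A B) (hu : u ∈ A) (hw : w ∈ B)
    (huv : G.Adj u v) (hwv : G.Adj w v) : v ∈ S :=
  (h.mem_or_mem_of_adj hu huv).elim id fun hv => absurd hwv.symm (h.not_adj v hv w hw)

end IsSeparation

theorem exists_isSeparation [Finite V] {G : SimpleGraph V} {S : Finset V}
    (hS : ¬ (G.induce ((S : Set V)ᶜ)).Preconnected) : ∃ A B, IsSeparation G S A B := by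
  classical
  have := Fintype.ofFinite V
  obtain ⟨⟨x, hxS⟩, ⟨y, hyS⟩, hxy⟩ : ∃ x y, ¬ (G.induce ((S : Set V)ᶜ)).Reachable x y := by
    simpa [Preconnected] using hS
  obtain ⟨A, hxA, hA, hadj, hAS⟩ := exists_component_induce_compl G hxS
  refine ⟨A, (S ∪ A)ᶜ, fun v => ?_, ?_, fun a ha b hb hab => ?_, ⟨x, hxA⟩, ⟨y, ?_⟩⟩
  · by_cases hv : v ∈ S ∪ A
    · exact (Finset.mem_union.1 hv).imp_right Or.inl
    · exact Or.inr (Or.inr (Finset.mem_compl.2 hv))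
  · exact disjoint_compl_right.mono_left Finset.subset_union_right
  · exact Finset.mem_compl.1 hb (Finset.mem_union.2 (hadj a ha b hab).symm)
  · rw [Finset.mem_compl, Finset.mem_union, not_or]
    refine ⟨hyS, fun hyA => hxy ?_⟩
    exact (hA ⟨x, hxA⟩ ⟨y, hyA⟩).map (induceHomOfLE G hAS).toHom

section
variable [Fintype V] [DecidableEq V]

theorem IsCycleMap.adj_of_mem_cycleShift {G : SimpleGraph V} [DecidableRel G.Adj]
    {c : ℤ → V} {n : ℕ} {H : Finset V} {x : V} {i k : ℤ} (h : IsCycleMap G c n)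
    (hi : c i ∈ cycleShift c n k (G.neighborFinset x \ H)) : G.Adj (c (i - k)) x := by
  rw [h.apply_mem_cycleShift, Finset.mem_sdiff, mem_neighborFinset] at hi
  exact hi.1.symm

theorem minDegree_add_one_le_card_sdiff_add_card (G : SimpleGraph V) [DecidableRel G.Adj]
    {H : Finset V} {x : V} (hx : x ∈ H) :
    G.minDegree + 1 ≤ (G.neighborFinset x \ H).card + H.card := by
  have := card_neighborFinset_inter_add_one_le (G := G) hx
  have := card_neighborFinset_inter_add_sdiff G H x
  have := G.minDegree_le_degree x
  omega

theorem exists_adj_of_crosses {G : SimpleGraph V} [DecidableRel G.Adj] {H : Finset V}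
    {x y u v : V} (hx : x ∈ H) (hy : y ∈ H) (hxy : x ≠ y)
    (hR : Crosses (G.neighborFinset x \ H) (G.neighborFinset y \ H) u v) :
    ∃ s ∈ H, ∃ t ∈ H, s ≠ t ∧ G.Adj u s ∧ G.Adj t v := by
  simp only [Crosses, Finset.mem_sdiff, mem_neighborFinset] at hR
  rcases hR with ⟨⟨hu, -⟩, hv, -⟩ | ⟨⟨hu, -⟩, hv, -⟩
  exacts [⟨x, hx, y, hy, hxy, hu.symm, hv⟩, ⟨y, hy, x, hx, hxy.symm, hu.symm, hv⟩]

end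

namespace IsComponentOff

theorem exists_isLongestCycleMap_exchange {G : SimpleGraph V} {c : ℤ → V} {n : ℕ}
    {H : Finset V} {s t : V} {i : ℤ} (hH : IsComponentOff G c H) (h : IsLongestCycleMap G c n)
    (hcard : H.card = 2) (hs : s ∈ H) (ht : t ∈ H) (hst : s ≠ t) (hn : 3 < n)
    (hi : G.Adj (c i) s) (hj : G.Adj t (c (i + 3))) :
    ∃ d, IsLongestCycleMap G d n ∧ c (i + 1) ∉ Set.range d ∧ c (i + 2) ∉ Set.range d := by
  obtain ⟨P, hP, hPH, hPc⟩ := hH.exists_path hs ht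
  have hPlen : P.length = 2 := by
    have := hP.one_lt_length hst
    have := hP.length_le_card hPH
    omega
  have hQ : IsListPath G (arc c (i + 3) (i + n)) (c (i + 3)) (c i) := by
    simpa only [h.apply_add] using h.isListPath_arc (i := i + 3) (j := i + n) (by omega) (by omega)
  have hl := hP.append hQ hj fun v hv hv' => hPc v hv (mem_range_of_mem_arc hv')
  have hlen : (P ++ arc c (i + 3) (i + n)).length = n := by
    rw [List.length_append, length_arc, hPlen]
    omega
  obtain ⟨d, hd, hrange⟩ := exists_isCycleMap hl hi (by omega)
  have hoff (k : ℤ) (hik : i < k) (hki : k < i + 3) : c k ∉ Set.range d := by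
    rw [hrange, List.mem_append, mem_arc, not_or]
    refine ⟨fun hk => hPc _ hk ⟨k, rfl⟩, ?_⟩
    rintro ⟨m, him, hmi, hmk⟩
    exact h.ne (by omega) (by omega) hmk.symm
  rw [hlen] at hd
  exact ⟨d, ⟨hd, h.length_le⟩, hoff _ (by omega) (by omega), hoff _ (by omega) (by omega)⟩

variable [Fintype V] [DecidableEq V] {G : SimpleGraph V} [DecidableRel G.Adj] {c : ℤ → V} {n : ℕ}
  {H S A B : Finset V} {x y t v : V}

theorem not_adj_of_mem_cycleShift_one (hH : IsComponentOff G c H) (h : IsLongestCycleMap G c n)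
    (hx : x ∈ H) (ht : t ∈ H) (hv : v ∈ cycleShift c n 1 (G.neighborFinset x \ H)) :
    ¬ G.Adj v t := by
  obtain ⟨i, rfl⟩ := h.mem_cycleVerts.1 (h.cycleShift_subset hv)
  simpa using hH.not_adj_succ h hx ht (h.adj_of_mem_cycleShift hv)

theorem not_adj_of_mem_cycleShift_neg_one (hH : IsComponentOff G c H)
    (h : IsLongestCycleMap G c n) (hx : x ∈ H) (ht : t ∈ H)
    (hv : v ∈ cycleShift c n (-1) (G.neighborFinset x \ H)) : ¬ G.Adj v t :=
  hH.comp_neg.not_adj_of_mem_cycleShift_one h.comp_neg hx ht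
    (by rwa [h.cycleShift_comp_neg])

theorem disjoint_cycleShift_one_cycleShift_neg_one (hH : IsComponentOff G c H)
    (h : IsLongestCycleMap G c n) (hx : x ∈ H) (hy : y ∈ H) (hxy : x ≠ y) :
    Disjoint (cycleShift c n 1 (G.neighborFinset x \ H))
      (cycleShift c n (-1) (G.neighborFinset y \ H)) := by
  refine Finset.disjoint_left.2 fun v hvx hvy => ?_
  obtain ⟨i, rfl⟩ := h.mem_cycleVerts.1 (h.cycleShift_subset hvx)
  have hix := h.adj_of_mem_cycleShift hvx
  have hiy := h.adj_of_mem_cycleShift hvy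
  have := h.three_le
  have := hH.add_two_lt h hx hy hxy (by omega) (by omega) hix hiy.symm
  omega

theorem card_union_cycleShift (hH : IsComponentOff G c H) (h : IsLongestCycleMap G c n)
    (hx : x ∈ H) (hy : y ∈ H) (hxy : x ≠ y) :
    (G.neighborFinset x \ H ∪ cycleShift c n 1 (G.neighborFinset x \ H) ∪
        cycleShift c n (-1) (G.neighborFinset y \ H) ∪ H).card =
      2 * (G.neighborFinset x \ H).card + (G.neighborFinset y \ H).card + H.card := by
  have hxC := hH.neighborFinset_sdiff_subset h.toIsCycleMap hx
  have hyC := hH.neighborFinset_sdiff_subset h.toIsCycleMap hy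
  have hadj (v) (hv : v ∈ G.neighborFinset x \ H) : G.Adj v x :=
    ((G.mem_neighborFinset x v).1 (Finset.mem_sdiff.1 hv).1).symm
  rw [Finset.card_union_of_disjoint, Finset.card_union_of_disjoint, Finset.card_union_of_disjoint,
    h.card_cycleShift hxC, h.card_cycleShift hyC, two_mul]
  · exact Finset.disjoint_left.2 fun v hv hv' =>
      hH.not_adj_of_mem_cycleShift_one h hx hx hv' (hadj v hv)
  · rw [Finset.disjoint_union_left]
    refine ⟨Finset.disjoint_left.2 fun v hv hv' => ?_,
      hH.disjoint_cycleShift_one_cycleShift_neg_one h hx hy hxy⟩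
    exact hH.not_adj_of_mem_cycleShift_neg_one h hy hx hv' (hadj v hv)
  · exact (hH.disjoint_cycleVerts h.toIsCycleMap).symm.mono_left
      (Finset.union_subset (Finset.union_subset hxC h.cycleShift_subset) h.cycleShift_subset)

theorem card_cycleShift_one_inter_le_one (hH : IsComponentOff G c H) (h : IsLongestCycleMap G c n)
    (hcard : H.card = 2) (hsep : IsSeparation G S A B) (hS3 : 3 ≤ S.card)
    (hS : Fintype.card V + 2 * S.card ≤ 4 * G.minDegree) (hy : y ∈ H) (hyA : y ∈ A) :
    (cycleShift c n 1 (G.neighborFinset y \ H) ∩ B).card ≤ 1 := by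
  by_contra! hlt
  obtain ⟨x, hx, hxy⟩ := Finset.exists_mem_ne (by omega : 1 < H.card) y
  obtain ⟨v, hv, w, hw, hvw⟩ := Finset.one_lt_card.1 hlt
  rw [Finset.mem_inter] at hv hw
  obtain ⟨i, rfl⟩ := h.mem_cycleVerts.1 (h.cycleShift_subset hv.1)
  obtain ⟨k, rfl⟩ := h.mem_cycleVerts.1 (h.cycleShift_subset hw.1)
  obtain ⟨j, ⟨hij, hji⟩, hjk⟩ := h.exists_index_Ioc k i
  have hne : j ≠ i + n := by
    rintro rfl
    exact hvw (by rw [← hjk, h.apply_add])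
  rw [← hjk] at hw
  have hle := hH.degree_succ_add_degree_succ_le h hx hy hy hxy.symm hxy.symm (i := i - 1)
    (j := j - 1) (by omega) (by omega) (h.adj_of_mem_cycleShift hv.1)
    (h.adj_of_mem_cycleShift hw.1).symm
    (hH.neighborFinset_sdiff_subset_attachments h.toIsCycleMap hy)
  rw [sub_add_cancel, sub_add_cancel] at hle
  have hsub : (G.neighborFinset y \ H) ∩ (G.neighborFinset (c i) ∪ G.neighborFinset (c j)) ⊆ S := by
    intro u hu
    simp only [Finset.mem_inter, Finset.mem_sdiff, Finset.mem_union, mem_neighborFinset] at hu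
    rcases hu with ⟨⟨hyu, -⟩, hiu | hju⟩
    exacts [hsep.mem_of_adj_of_adj hyA hv.2 hyu hiu, hsep.mem_of_adj_of_adj hyA hw.2 hyu hju]
  have := Finset.card_le_card hsub
  have := minDegree_add_one_le_card_sdiff_add_card G hx
  have := minDegree_add_one_le_card_sdiff_add_card G hy
  have := G.minDegree_le_degree (c i)
  have := G.minDegree_le_degree (c j)
  omega

omit [DecidableEq V] in
theorem not_subset_of_isSeparation (hH : IsComponentOff G c H) (h : IsLongestCycleMap G c n)
    (hcard : H.card = 2) (hsep : IsSeparation G S A B) (hS3 : 3 ≤ S.card)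
    (hS : Fintype.card V + 2 * S.card ≤ 4 * G.minDegree) : ¬ H ⊆ A := by
  classical
  intro hHA
  obtain ⟨x, hx, y, hy, hxy⟩ := Finset.one_lt_card.1 (by omega : 1 < H.card)
  obtain ⟨w, hw⟩ := hsep.nonempty_right
  have hX := hH.card_cycleShift_one_inter_le_one h hcard hsep hS3 hS hx (hHA hx)
  have hY := hH.comp_neg.card_cycleShift_one_inter_le_one h.comp_neg hcard hsep hS3 hS hy (hHA hy)
  rw [h.cycleShift_comp_neg] at hY
  have hK := hH.card_union_cycleShift h hx hy hxy
  set X := cycleShift c n 1 (G.neighborFinset x \ H)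
  set Y := cycleShift c n (-1) (G.neighborFinset y \ H)
  set K := G.neighborFinset x \ H ∪ X ∪ Y ∪ H
  set W := insert w (G.neighborFinset w)
  have hWcard : W.card = G.degree w + 1 := by
    rw [Finset.card_insert_of_notMem (by simp), card_neighborFinset_eq_degree]
  have hW (v) (hv : v ∈ W) : v ∈ S ∨ v ∈ B := by
    rcases Finset.mem_insert.1 hv with rfl | hv
    exacts [Or.inr hw, hsep.symm.mem_or_mem_of_adj hw ((G.mem_neighborFinset w v).1 hv)]
  have hKW : K ∩ W ⊆ S ∪ (X ∩ B ∪ Y ∩ B) := by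
    intro v hv
    obtain ⟨hvK, hvW⟩ := Finset.mem_inter.1 hv
    rcases hW v hvW with hvS | hvB
    · exact Finset.mem_union_left _ hvS
    · have hvx : v ∉ G.neighborFinset x \ H := fun hvx =>
        hsep.not_adj x (hHA hx) v hvB ((G.mem_neighborFinset x v).1 (Finset.mem_sdiff.1 hvx).1)
      have hvH : v ∉ H := fun hvH => Finset.disjoint_left.1 hsep.disjoint (hHA hvH) hvB
      simp only [K, Finset.mem_union, Finset.mem_inter] at hvK ⊢
      tauto
  have := Finset.card_le_card hKW
  have := Finset.card_union_le S (X ∩ B ∪ Y ∩ B)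
  have := Finset.card_union_le (X ∩ B) (Y ∩ B)
  have := Finset.card_union_add_card_inter K W
  have := Finset.card_le_univ (K ∪ W)
  have := minDegree_add_one_le_card_sdiff_add_card G hx
  have := minDegree_add_one_le_card_sdiff_add_card G hy
  have := G.minDegree_le_degree w
  omega

omit [DecidableEq V] in
theorem exists_attached_add_three (hH : IsComponentOff G c H) (h : IsLongestCycleMap G c n)
    (hcard : H.card = 2) (hS3 : 3 ≤ S.card)
    (hS : Fintype.card V + 2 * S.card ≤ 4 * G.minDegree) :
    ∃ i, ∃ s ∈ H, ∃ t ∈ H, s ≠ t ∧ 3 < n ∧ G.Adj (c i) s ∧ G.Adj t (c (i + 3)) ∧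
      c (i + 1) ∉ S ∧ c (i + 2) ∉ S := by
  classical
  obtain ⟨x, hx, y, hy, hxy⟩ := Finset.one_lt_card.1 (by omega : 1 < H.card)
  have hx' := minDegree_add_one_le_card_sdiff_add_card G hx
  have hy' := minDegree_add_one_le_card_sdiff_add_card G hy
  have hn := hH.card_add_card_le h.toIsCycleMap
  have hn3 := h.three_le
  have hAC := hH.neighborFinset_sdiff_subset h.toIsCycleMap hx
  have hM := Finset.union_subset hAC (hH.neighborFinset_sdiff_subset h.toIsCycleMap hy)
  have hatt := Finset.union_subset (hH.neighborFinset_sdiff_subset_attachments h.toIsCycleMap hx)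
    (hH.neighborFinset_sdiff_subset_attachments h.toIsCycleMap hy)
  have hcross {i j : ℤ} := exists_adj_of_crosses (G := G) (u := c i) (v := c j) hx hy hxy
  set A := G.neighborFinset x \ H
  set B := G.neighborFinset y \ H
  have hM2 : 2 ≤ (A ∪ B).card := by
    have := Finset.card_le_card (Finset.subset_union_left (s₁ := A) (s₂ := B))
    omega
  have hgap (i j : ℤ) (hi : c i ∈ A ∪ B) (hN : IsNext c (A ∪ B) i j) : ((2 : ℕ) : ℤ) ≤ j - i :=
    hH.two_le_sub_of_isNext h hM (fun m hm => (mem_attachments.1 (hatt hm)).2) hM2 hi hN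
  have hgap_cross (i j : ℤ) (hN : IsNext c (A ∪ B) i j) (hR : Crosses A B (c i) (c j)) :
      ((2 : ℕ) + 1 : ℤ) ≤ j - i := by
    obtain ⟨s, hs, t, ht, hst, hi, hj⟩ := hcross hR
    have := hH.add_two_lt h hs ht hst hN.lt (h.lt_add_of_isNext hM hM2 hN) hi hj
    push_cast
    omega
  have := Finset.card_union_add_card_inter A B
  have := Finset.card_le_card (h.inter_subset_gapStarts_crosses (B := B) hAC)
  obtain ⟨i, hN, hR, hiS⟩ := h.exists_rel_add_forall_notMem hM hgap hgap_cross (S := S) (by omega)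
  obtain ⟨s, hs, t, ht, hst, hi, hj⟩ := hcross hR
  have := h.lt_add_of_isNext hM hM2 hN
  exact ⟨i, s, hs, t, ht, hst, by omega, hi, hj, hiS _ (by omega) (by omega),
    hiS _ (by omega) (by omega)⟩

theorem card_ne_two (hH : IsComponentOff G c H) (h : IsLongestCycleMap G c n)
    (h3 : KConnected G 3) (hsep : IsSeparation G S A B) (hS3 : 3 ≤ S.card)
    (hS : Fintype.card V + 2 * S.card ≤ 4 * G.minDegree) : H.card ≠ 2 := by
  intro hcard
  obtain ⟨i, s, hs, t, ht, hst, hn, hi, hj, h1S, h2S⟩ :=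
    hH.exists_attached_add_three h hcard hS3 hS
  obtain ⟨d, hd, h1d, h2d⟩ :=
    hH.exists_isLongestCycleMap_exchange h hcard hs ht hst hn hi hj
  have hadj : G.Adj (c (i + 1)) (c (i + 2)) := by
    simpa only [add_assoc, one_add_one_eq_two] using h.adj (i + 1)
  obtain ⟨K, hK, h1K⟩ := exists_isComponentOff G h1d
  have h2K := (hK.mem_or_mem_range _ h1K _ hadj).resolve_right h2d
  have hpair : ({c (i + 1), c (i + 2)} : Finset V) = K := by
    refine Finset.eq_of_subset_of_card_le (by simp [Finset.insert_subset_iff, h1K, h2K]) ?_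
    rw [Finset.card_pair hadj.ne]
    exact hK.card_le_two hd h3 (by omega)
  have hKcard : K.card = 2 := by rw [← hpair, Finset.card_pair hadj.ne]
  have hsame {A B : Finset V} (hsep : IsSeparation G S A B) (h1A : c (i + 1) ∈ A) : False := by
    have h2A := (hsep.mem_or_mem_of_adj h1A hadj).resolve_left h2S
    refine hK.not_subset_of_isSeparation hd hKcard hsep hS3 hS ?_
    simp [← hpair, Finset.insert_subset_iff, h1A, h2A]
  rcases (hsep.mem_or_mem (c (i + 1))).resolve_left h1S with h1A | h1B
  exacts [hsame hsep h1A, hsame hsep.symm h1B]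

end IsComponentOff

theorem IsLongestPathOn.exists_isListPath_adj {G : SimpleGraph V} {H : Finset V}
    {l : List V} {a b v w : V} (h : IsLongestPathOn G H l a b) (hv : v ∈ H) (hav : G.Adj a v)
    (hw : w ∈ H) (haw : G.Adj a w) (hvw : v ≠ w) :
    ∃ l' b', IsListPath G l' a b' ∧ G.Adj b' a ∧ 3 ≤ l'.length := by
  classical
  have hlt {u} (hu : u ∈ H) (hau : G.Adj a u) : l.idxOf u < l.length :=
    List.idxOf_lt_length_iff.2 (h.mem_of_adj_left hu hau)
  have hpos {u} (hu : u ∈ H) (hau : G.Adj a u) : l.idxOf u ≠ 0 := fun h0 => hau.ne <| by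
    rw [← h.getElem_zero, ← List.getElem_idxOf (hlt hu hau)]
    simp only [h0]
  have hne : l.idxOf v ≠ l.idxOf w := fun he =>
    hvw ((List.idxOf_inj (h.mem_of_adj_left hv hav)).1 he)
  obtain ⟨u, hu, hau, h2⟩ : ∃ u ∈ H, G.Adj a u ∧ 2 ≤ l.idxOf u := by
    have := hpos hv hav
    have := hpos hw haw
    rcases hne.lt_or_gt with hlt | hlt
    exacts [⟨w, hw, haw, by omega⟩, ⟨v, hv, hav, by omega⟩]
  have hul := hlt hu hau
  refine ⟨l.take (l.idxOf u + 1), u, ?_, hau.symm, ?_⟩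
  · simpa only [List.getElem_idxOf hul] using h.take hul
  · rw [List.length_take]
    omega

theorem IsListPath.exists_isPath {G : SimpleGraph V} {l : List V} {a b : V}
    (h : IsListPath G l a b) : ∃ p : G.Walk a b, p.IsPath ∧ p.support = l := by
  have hne : l ≠ [] := List.ne_nil_of_mem h.left_mem
  obtain rfl : l.head hne = a := by simpa [List.head?_eq_some_head hne] using h.head?
  obtain rfl : l.getLast hne = b := by simpa [List.getLast?_eq_some_getLast hne] using h.getLast?
  exact ⟨Walk.ofSupport l hne h.isChain, by simpa [Walk.isPath_def] using h.nodup, by simp⟩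

section
variable [Fintype V] {G : SimpleGraph V}

theorem exists_isLongestCycleMap [Nonempty V] [DecidableRel G.Adj] (hδ : 2 ≤ G.minDegree) :
    ∃ c n, IsLongestCycleMap G c n := by
  let s := {k | ∃ l a b, IsListPath G l a b ∧ G.Adj b a ∧ 3 ≤ l.length ∧ l.length = k}
  have hs : BddAbove s := by
    refine ⟨Fintype.card V, ?_⟩
    rintro _ ⟨l, a, b, hl, -, -, rfl⟩
    exact hl.length_le_card fun v _ => Finset.mem_univ v
  have hne : s.Nonempty := by
    obtain ⟨l, a, b, hl⟩ := exists_isLongestPathOn G (Finset.univ_nonempty (α := V))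
    obtain ⟨v, hv, w, hw, hvw⟩ : ∃ v ∈ G.neighborFinset a, ∃ w ∈ G.neighborFinset a, v ≠ w :=
      Finset.one_lt_card.1 (hδ.trans (G.minDegree_le_degree a))
    obtain ⟨l', b', hl', hba, h3⟩ := hl.exists_isListPath_adj (Finset.mem_univ v)
      ((G.mem_neighborFinset a v).1 hv) (Finset.mem_univ w) ((G.mem_neighborFinset a w).1 hw) hvw
    exact ⟨_, l', a, b', hl', hba, h3, rfl⟩
  obtain ⟨l, a, b, hl, hba, h3, hk⟩ := Nat.sSup_mem hne hs
  obtain ⟨c, hc, -⟩ := exists_isCycleMap hl hba h3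
  refine ⟨c, l.length, hc, fun l' a' b' hl' hba' => ?_⟩
  by_cases h3' : 3 ≤ l'.length
  · exact hk ▸ le_csSup hs ⟨l', a', b', hl', hba', h3', rfl⟩
  · omega

theorem not_preconnected_induce_compl {S : Finset V} (hS : S.card < Fintype.card V)
    (h : ¬ (G.induce ((S : Set V)ᶜ)).Connected) : ¬ (G.induce ((S : Set V)ᶜ)).Preconnected := by
  obtain ⟨v, hv⟩ : ∃ v, v ∉ S := by
    by_contra! hv
    exact hS.ne (Finset.eq_univ_iff_forall.2 hv ▸ Finset.card_univ)
  exact fun hp => h ((connected_iff _).2 ⟨hp, ⟨⟨v, by simpa using hv⟩⟩⟩)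

variable [DecidableEq V]

theorem IsCycleMap.isHamiltonian {c : ℤ → V} {n : ℕ} (h : IsCycleMap G c n)
    (hc : Function.Surjective c) : G.IsHamiltonian := by
  intro _
  have hn3 := h.three_le
  have hn : n = Fintype.card V := by
    rw [← h.card_cycleVerts, ← Finset.card_univ]
    congr 1
    ext v
    simpa [h.mem_cycleVerts] using hc v
  obtain ⟨p, hp, hsupp⟩ := (h.isListPath_arc (i := 1) (j := n) (by omega) (by omega)).exists_isPath
  have hadj : G.Adj (c n) (c 1) := by simpa [← h.apply_add 0] using h.adj 0
  have hlen : p.length + 1 = n := by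
    rw [← p.length_support, hsupp, length_arc]
    omega
  refine ⟨_, Walk.cons hadj p, ?_⟩
  rw [Walk.isHamiltonianCycle_iff_isCycle_and_length_eq,
    Walk.isCycle_iff_isPath_tail_and_le_length, Walk.length_cons]
  exact ⟨⟨by simpa using hp, by omega⟩, by omega⟩

theorem card_le_indepNumber {s : Finset V} (hs : ∀ u ∈ s, ∀ v ∈ s, ¬ G.Adj u v) :
    s.card ≤ indepNumber G := by
  refine le_csSup ⟨Fintype.card V, ?_⟩ ⟨s, hs, rfl⟩
  rintro _ ⟨t, -, rfl⟩
  exact t.card_le_univ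

theorem KConnected.le_connectivity {k : ℕ} (h : KConnected G k) : k ≤ connectivity G :=
  le_csSup ⟨Fintype.card V, fun _ hk => hk.1.le⟩ h

theorem KConnected.exists_isSeparation {k : ℕ} (h : KConnected G k)
    (hκ : connectivity G + 1 < Fintype.card V) :
    ∃ S A B, IsSeparation G S A B ∧ k ≤ S.card ∧ S.card ≤ connectivity G := by
  obtain ⟨S, hSκ, hS⟩ :
      ∃ S : Finset V, S.card ≤ connectivity G ∧ ¬ (G.induce ((S : Set V)ᶜ)).Connected := by
    by_contra! hcon
    have := KConnected.le_connectivity (G := G) ⟨hκ, fun S hS => hcon S (Nat.lt_succ_iff.1 hS)⟩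
    omega
  have hkS : k ≤ S.card := by
    by_contra! hlt
    exact hS (h.2 S hlt)
  obtain ⟨A, B, hsep⟩ := _root_.exists_isSeparation (not_preconnected_induce_compl (by omega) hS)
  exact ⟨S, A, B, hsep, hkS, hSκ⟩

end

namespace IsComponentOff
variable [Fintype V] [DecidableEq V] {G : SimpleGraph V} [DecidableRel G.Adj] {c : ℤ → V} {n : ℕ}
  {H : Finset V}

theorem not_adj_of_mem_cycleShift {x u w : V} (hH : IsComponentOff G c H)
    (h : IsLongestCycleMap G c n) (hx : x ∈ H) (hu : u ∈ cycleShift c n 1 (G.neighborFinset x \ H))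
    (hw : w ∈ cycleShift c n 1 (G.neighborFinset x \ H)) : ¬ G.Adj u w := by
  obtain ⟨i, rfl⟩ := h.mem_cycleVerts.1 (h.cycleShift_subset hu)
  obtain ⟨k, rfl⟩ := h.mem_cycleVerts.1 (h.cycleShift_subset hw)
  obtain ⟨j, ⟨hij, hji⟩, hjk⟩ := h.exists_index_Ioc k i
  rcases hji.eq_or_lt with rfl | hji
  · simp [← hjk, h.apply_add]
  · rw [← hjk] at hw ⊢
    simpa only [sub_add_cancel] using hH.not_adj_succ_succ h hx hx (i := i - 1) (j := j - 1)
      (by omega) (by omega) (h.adj_of_mem_cycleShift hu) (h.adj_of_mem_cycleShift hw).symm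

theorem minDegree_lt_indepNumber (hH : IsComponentOff G c H) (h : IsLongestCycleMap G c n)
    (hcard : H.card = 1) : G.minDegree < indepNumber G := by
  obtain ⟨x, hx⟩ := Finset.card_pos.1 (by omega : 0 < H.card)
  set X := cycleShift c n 1 (G.neighborFinset x \ H)
  have hxX : x ∉ X := fun hxX => Finset.disjoint_left.1 (hH.disjoint_cycleVerts h.toIsCycleMap) hx
    (h.cycleShift_subset hxX)
  have hindep : ∀ u ∈ insert x X, ∀ w ∈ insert x X, ¬ G.Adj u w := by
    simp only [Finset.forall_mem_insert]
    exact ⟨⟨G.loopless.irrefl x,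
        fun w hw hxw => hH.not_adj_of_mem_cycleShift_one h hx hx hw hxw.symm⟩,
      fun u hu => ⟨hH.not_adj_of_mem_cycleShift_one h hx hx hu,
        fun w hw => hH.not_adj_of_mem_cycleShift h hx hu hw⟩⟩
  calc G.minDegree + 1 ≤ (G.neighborFinset x \ H).card + H.card :=
        minDegree_add_one_le_card_sdiff_add_card G hx
    _ = (insert x X).card := by
        rw [Finset.card_insert_of_notMem hxX,
          h.card_cycleShift (hH.neighborFinset_sdiff_subset h.toIsCycleMap hx), hcard]
    _ ≤ indepNumber G := card_le_indepNumber hindep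

theorem connectivity_add_one_lt (hH : IsComponentOff G c H) (h : IsLongestCycleMap G c n)
    (h3 : KConnected G 3) (hcard : 2 ≤ H.card)
    (hδ : Fintype.card V + 2 * connectivity G ≤ 4 * G.minDegree) :
    connectivity G + 1 < Fintype.card V := by
  obtain ⟨y, hy⟩ := Finset.card_pos.1 (by omega : 0 < H.card)
  have := h3.1
  have := hH.card_neighbors_outside_le h h3 hcard hy
  have := minDegree_add_one_le_card_sdiff_add_card G hy
  omega

theorem card_eq_one (hH : IsComponentOff G c H) (h : IsLongestCycleMap G c n)
    (h3 : KConnected G 3) (hne : H.Nonempty)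
    (hδ : Fintype.card V + 2 * connectivity G ≤ 4 * G.minDegree) : H.card = 1 := by
  have hκ := h3.le_connectivity
  have hle := hH.card_le_two h h3 (by omega)
  have hpos := hne.card_pos
  by_contra hne1
  obtain ⟨S, A, B, hsep, hS3, hSκ⟩ :=
    h3.exists_isSeparation (hH.connectivity_add_one_lt h h3 (by omega) hδ)
  have := hH.card_ne_two h h3 hsep hS3 (by omega)
  omega

end IsComponentOff

theorem nikoghosyan_1985_hamiltonian (G : SimpleGraph V) [Fintype V] [DecidableEq V] [DecidableRel G.Adj]
    (h3 : KConnected G 3)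
    (hδ : (G.minDegree : ℝ) ≥
      max ((Fintype.card V + 2 * connectivity G : ℝ) / 4) (indepNumber G : ℝ)) :
    G.IsHamiltonian := by
  obtain ⟨hκ, hα⟩ := max_le_iff.1 hδ
  have hδκ : Fintype.card V + 2 * connectivity G ≤ 4 * G.minDegree := by
    rw [div_le_iff₀' four_pos] at hκ
    exact_mod_cast hκ
  have hδα : indepNumber G ≤ G.minDegree := by exact_mod_cast hα
  have := h3.1
  have : Nonempty V := Fintype.card_pos_iff.1 (by omega)
  obtain ⟨c, n, hc⟩ := exists_isLongestCycleMap (G := G) (by have := h3.le_connectivity; omega)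
  refine hc.isHamiltonian fun v => ?_
  by_contra hv
  obtain ⟨H, hH, hvH⟩ := exists_isComponentOff G hv
  exact (hH.minDegree_lt_indepNumber hc (hH.card_eq_one hc h3 ⟨v, hvH⟩ hδκ)).not_ge hδα
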